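/- arXiv:math/0306375 — 5 statements merged into one kernel-verified Lean document; each statement's English description precedes it below -/
import Mathlib

section
/- Let u > 0 and x = e^{-u} ∈ (0,1). Then every holomorphic covering map φ : 𝔻 → 𝔻 \ {x} with φ(0) = 0 satisfies |φ′(0)| = u / sinh(u). -/
open Complex Metric Set

noncomputable section

/-- `IsCoveringMap` as Mathlib defined it in December 2024 (through `Trivialization`). -/
def IsCoveringMapOld {E X : Type*} [TopologicalSpace E] [TopologicalSpace X] (f : E → X) : Prop :=
  ∀ x, DiscreteTopology (f ⁻¹' {x}) ∧ ∃ t : Bundle.Trivialization (f ⁻¹' {x}) f, x ∈ t.baseSet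

/-- A holomorphic covering map from the unit disc onto `U`:
`φ` is holomorphic on `𝔻`, maps `𝔻` into `U`, and its restriction `𝔻 → U`
is a topological covering map. -/
def IsHoloCover (φ : ℂ → ℂ) (U : Set ℂ) : Prop :=
  DifferentiableOn ℂ φ (Metric.ball 0 1) ∧
  ∃ h : Set.MapsTo φ (Metric.ball 0 1) U,
    IsCoveringMapOld (Set.MapsTo.restrict φ (Metric.ball 0 1) U h)

/-
Any two holomorphic covers `φ, ψ : 𝔻 → U` with `φ 0 = ψ 0` have `|φ' 0| = |ψ' 0|`: each lifts
through the other, the lift is a holomorphic self-map of `𝔻` fixing `0`, and the Schwarz lemma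
bounds its derivative by `1`. It therefore suffices to compute with one cover of `𝔻 \ {a}`. Let
`C` be the Cayley transform from `𝔻` to the left half-plane with `C 0 = log a`, and `T` the
involution of `𝔻` swapping `0` and `a`. Then `T ∘ exp ∘ C` is such a cover, because `exp` covers
`𝔻 \ {0}` by the left half-plane.
-/

open scoped Topology ComplexConjugate

section HolomorphicInverse

lemma not_eventually_eq_const_of_injOn {X Y : Type*} [TopologicalSpace X] {f : X → Y} {s : Set X}
    {x : X} [(𝓝[≠] x).NeBot] (hf : InjOn f s) (hs : s ∈ 𝓝 x) :
    ¬ ∀ᶠ y in 𝓝 x, f y = f x := by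
  intro hconst
  obtain ⟨y, ⟨hy, hys⟩, hyx⟩ :=
    (((hconst.and hs).filter_mono nhdsWithin_le_nhds).and
      (self_mem_nhdsWithin : {x}ᶜ ∈ 𝓝[≠] x)).exists
  exact hyx (hf hys (mem_of_mem_nhds hs) hy)

lemma isOpenMap_domRestrict_of_injOn {f : ℂ → ℂ} {s : Set ℂ} (hs : IsOpen s)
    (hf : DifferentiableOn ℂ f s) (hinj : InjOn f s) : IsOpenMap (s.domRestrict f) := by
  refine isOpenMap_iff_nhds_le.2 fun z => ?_
  have hz : s ∈ 𝓝 (z : ℂ) := hs.mem_nhds z.2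
  rw [show s.domRestrict f = f ∘ Subtype.val from rfl, ← Filter.map_map,
    map_nhds_subtype_coe_eq_nhds z.2 hz]
  exact ((hf.analyticAt hz).eventually_constant_or_nhds_le_map_nhds).resolve_left
    (not_eventually_eq_const_of_injOn hinj hz)

lemma exists_openPartialHomeomorph_of_injOn {f : ℂ → ℂ} {s : Set ℂ} (hs : IsOpen s)
    (hf : DifferentiableOn ℂ f s) (hinj : InjOn f s) :
    ∃ e : OpenPartialHomeomorph ℂ ℂ, e.source = s ∧ ⇑e = f :=
  ⟨.ofContinuousOpenRestrict (hinj.toPartialEquiv f s) hf.continuousOn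
    (isOpenMap_domRestrict_of_injOn hs hf hinj) hs, rfl, rfl⟩

lemma eventually_deriv_ne_zero_of_injOn {f : ℂ → ℂ} {s : Set ℂ} {z : ℂ} (hs : IsOpen s)
    (hf : DifferentiableOn ℂ f s) (hinj : InjOn f s) (hz : z ∈ s) :
    ∀ᶠ w in 𝓝[≠] z, deriv f w ≠ 0 := by
  have hsz := hs.mem_nhds hz
  refine (hf.analyticAt hsz).deriv.eventually_eq_zero_or_eventually_ne_zero.resolve_left
    fun hzero => not_eventually_eq_const_of_injOn hinj hsz ?_
  obtain ⟨r, hr, hball⟩ := Metric.eventually_nhds_iff_ball.1 (hzero.and hsz)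
  filter_upwards [ball_mem_nhds z hr] with w hw
  exact isOpen_ball.is_const_of_deriv_eq_zero (convex_ball _ _).isPreconnected
    (hf.mono fun y hy => (hball y hy).2) (fun y hy => (hball y hy).1) hw (mem_ball_self hr)

lemma differentiableOn_symm {e : OpenPartialHomeomorph ℂ ℂ} (he : DifferentiableOn ℂ e e.source) :
    DifferentiableOn ℂ e.symm e.target := by
  intro w hw
  have hcont : ContinuousAt e.symm w := e.symm.continuousAt hw
  have htarget : ∀ᶠ y in 𝓝[≠] w, y ∈ e.target :=
    eventually_nhdsWithin_of_eventually_nhds (e.open_target.mem_nhds hw)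
  have hpunctured : Filter.Tendsto e.symm (𝓝[≠] w) (𝓝[≠] e.symm w) :=
    tendsto_nhdsWithin_of_tendsto_nhds_of_eventually_within _
      (hcont.tendsto.mono_left nhdsWithin_le_nhds) <| by
        filter_upwards [htarget, self_mem_nhdsWithin] with y hy hyw
        exact fun h => hyw (e.symm.injOn hy hw h)
  refine (analyticAt_of_differentiable_on_punctured_nhds_of_continuousAt ?_
    hcont).differentiableAt.differentiableWithinAt
  filter_upwards [htarget, hpunctured.eventually <|
    eventually_deriv_ne_zero_of_injOn e.open_source he e.injOn (e.map_target hw)] with y hy hderiv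
  exact (e.hasDerivAt_symm hy hderiv (he.differentiableAt
    (e.open_source.mem_nhds (e.map_target hy))).hasDerivAt).differentiableAt

lemma differentiableAt_of_comp_eventuallyEq {E : Type*} [NormedAddCommGroup E] [NormedSpace ℂ E]
    {p : ℂ → ℂ} {s : Set ℂ} {k ψ : E → ℂ} {z : E} (hs : IsOpen s) (hp : DifferentiableOn ℂ p s)
    (hinj : InjOn p s) (hkz : k z ∈ s) (hk : ContinuousAt k z) (hψ : DifferentiableAt ℂ ψ z)
    (hpk : p ∘ k =ᶠ[𝓝 z] ψ) : DifferentiableAt ℂ k z := by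
  obtain ⟨e, rfl, rfl⟩ := exists_openPartialHomeomorph_of_injOn hs hp hinj
  have hk_eq : k =ᶠ[𝓝 z] e.symm ∘ ψ := by
    filter_upwards [hpk, hk.eventually (hs.mem_nhds hkz)] with y hy hys
    rw [Function.comp_apply, ← hy, Function.comp_apply, e.left_inv hys]
  have hψz : ψ z ∈ e.target := hpk.self_of_nhds ▸ e.map_source hkz
  exact (((differentiableOn_symm hp).differentiableAt (e.open_target.mem_nhds hψz)).comp z
    hψ).congr_of_eventuallyEq hk_eq

end HolomorphicInverse

section CoveringMap

variable {E X : Type*} [TopologicalSpace E] [TopologicalSpace X] {f : E → X}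

lemma isCoveringMapOld_iff [Nonempty E] :
    IsCoveringMapOld f ↔ IsCoveringMap f ∧ Function.Surjective f := by
  constructor
  · refine fun hf => ⟨fun x => ?_, fun x => ?_⟩
    · obtain ⟨_, t, hx⟩ := hf x
      exact .of_trivialization hx
    · obtain ⟨_, t, -⟩ := hf x
      exact ⟨_, (t (Classical.arbitrary E)).2.2⟩
  · rintro ⟨hf, hsurj⟩ x
    have : Nonempty (f ⁻¹' {x}) := nonempty_subtype.2 (hsurj x)
    exact ⟨(hf x).discreteTopology_fiber, (hf x).toTrivialization,
      (hf x).mem_toTrivialization_baseSet⟩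

end CoveringMap

section HoloCover

variable {φ ψ p : ℂ → ℂ} {U : Set ℂ}

lemma isHoloCover_iff : IsHoloCover φ U ↔ DifferentiableOn ℂ φ (ball 0 1) ∧
    ∃ h : MapsTo φ (ball 0 1) U,
      IsCoveringMap (h.restrict φ _ _) ∧ Function.Surjective (h.restrict φ _ _) := by
  have : Nonempty (ball (0 : ℂ) 1) := ⟨0, mem_ball_self one_pos⟩
  simp only [IsHoloCover, isCoveringMapOld_iff]

lemma IsHoloCover.exists_isOpen_injOn (hφ : IsHoloCover φ U) {z : ℂ} (hz : z ∈ ball 0 1) :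
    ∃ s ⊆ ball 0 1, IsOpen s ∧ z ∈ s ∧ InjOn φ s := by
  obtain ⟨-, hmaps, hcov, -⟩ := isHoloCover_iff.1 hφ
  obtain ⟨e, hze, he⟩ := hcov.isLocalHomeomorph ⟨z, hz⟩
  refine ⟨Subtype.val '' e.source, Subtype.coe_image_subset _ _,
    isOpen_ball.isOpenMap_subtype_val _ e.open_source, ⟨_, hze, rfl⟩, ?_⟩
  rintro _ ⟨x, hx, rfl⟩ _ ⟨y, hy, rfl⟩ hxy
  exact congrArg _ (e.injOn hx hy (by rw [← he]; exact Subtype.ext hxy))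

lemma IsHoloCover.exists_continuousOn_lift (hφ : IsHoloCover φ U) {Ω : Set ℂ} (hΩ : IsOpen Ω)
    (hΩsc : IsSimplyConnected Ω) (hψ : ContinuousOn ψ Ω) (hψU : MapsTo ψ Ω U) {z₀ w₀ : ℂ}
    (hz₀ : z₀ ∈ Ω) (hw₀ : w₀ ∈ ball 0 1) (h₀ : φ w₀ = ψ z₀) :
    ∃ k : ℂ → ℂ, ContinuousOn k Ω ∧ MapsTo k Ω (ball 0 1) ∧ k z₀ = w₀ ∧ EqOn (φ ∘ k) ψ Ω := by
  obtain ⟨-, hmaps, hcov, -⟩ := isHoloCover_iff.1 hφ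
  have := hΩsc.simplyConnectedSpace
  have := hΩ.locallyPathConnectedSpace
  obtain ⟨K, ⟨hKz₀, hK⟩, -⟩ := hcov.existsUnique_continuousMap_lifts
    ⟨hψU.restrict ψ _ _, hψ.mapsToRestrict hψU⟩ ⟨z₀, hz₀⟩ ⟨w₀, hw₀⟩ (Subtype.ext h₀)
  classical
  obtain ⟨k, hk⟩ : ∃ k : ℂ → ℂ, ∀ z : Ω, k z = K z :=
    ⟨fun z => if hz : z ∈ Ω then K ⟨z, hz⟩ else 0, by simp⟩
  refine ⟨k, ?_, fun z hz => ?_, ?_, fun z hz => ?_⟩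
  · rw [continuousOn_iff_continuous_domRestrict]
    exact (continuous_subtype_val.comp K.continuous).congr fun z => (hk z).symm
  · exact hk ⟨z, hz⟩ ▸ (K ⟨z, hz⟩).2
  · rw [hk ⟨z₀, hz₀⟩, hKz₀]
  · rw [Function.comp_apply, hk ⟨z, hz⟩]
    exact congrArg Subtype.val (congrFun hK ⟨z, hz⟩)

lemma IsHoloCover.exists_differentiableOn_lift (hφ : IsHoloCover φ U) {Ω : Set ℂ} (hΩ : IsOpen Ω)
    (hΩsc : IsSimplyConnected Ω) (hψ : DifferentiableOn ℂ ψ Ω) (hψU : MapsTo ψ Ω U) {z₀ w₀ : ℂ}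
    (hz₀ : z₀ ∈ Ω) (hw₀ : w₀ ∈ ball 0 1) (h₀ : φ w₀ = ψ z₀) :
    ∃ k : ℂ → ℂ, DifferentiableOn ℂ k Ω ∧ MapsTo k Ω (ball 0 1) ∧ k z₀ = w₀ ∧
      EqOn (φ ∘ k) ψ Ω := by
  obtain ⟨k, hk, hkmaps, hkz₀, hφk⟩ :=
    hφ.exists_continuousOn_lift hΩ hΩsc hψ.continuousOn hψU hz₀ hw₀ h₀
  refine ⟨k, fun z hz => ?_, hkmaps, hkz₀, hφk⟩
  have hΩz := hΩ.mem_nhds hz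
  obtain ⟨s, hs, hsopen, hkzs, hinj⟩ := hφ.exists_isOpen_injOn (hkmaps hz)
  exact (differentiableAt_of_comp_eventuallyEq hsopen (hφ.1.mono hs) hinj hkzs
    (hk.continuousAt hΩz) (hψ.differentiableAt hΩz)
    (hφk.eventuallyEq_of_mem hΩz)).differentiableWithinAt

theorem IsHoloCover.norm_deriv_zero_le (hφ : IsHoloCover φ U)
    (hψ : DifferentiableOn ℂ ψ (ball 0 1)) (hψU : MapsTo ψ (ball 0 1) U) (h₀ : ψ 0 = φ 0) :
    ‖deriv ψ 0‖ ≤ ‖deriv φ 0‖ := by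
  have hmem : (0 : ℂ) ∈ ball (0 : ℂ) 1 := mem_ball_self one_pos
  have hnhds : ball (0 : ℂ) 1 ∈ 𝓝 0 := isOpen_ball.mem_nhds hmem
  have hsc : IsSimplyConnected (ball (0 : ℂ) 1) := by
    have := contractibleSpace_ball (x := (0 : ℂ)) one_pos
    exact SimplyConnectedSpace.ofContractible _
  obtain ⟨k, hk, hkmaps, hk0, hφk⟩ :=
    hφ.exists_differentiableOn_lift isOpen_ball hsc hψ hψU hmem hmem h₀.symm
  have hschwarz : ‖deriv k 0‖ ≤ 1 := norm_deriv_le_one_of_mapsTo_ball hk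
    (fun z hz => hk0.symm ▸ ball_subset_closedBall (hkmaps hz)) one_pos
  have hchain : deriv ψ 0 = deriv φ 0 * deriv k 0 := by
    rw [← (hφk.eventuallyEq_of_mem hnhds).deriv_eq, deriv_comp _ (hk0.symm ▸
      hφ.1.differentiableAt hnhds) (hk.differentiableAt hnhds), hk0]
  rw [hchain, norm_mul]
  exact mul_le_of_le_one_right (norm_nonneg _) hschwarz

theorem IsHoloCover.norm_deriv_zero_eq (hφ : IsHoloCover φ U) (hψ : IsHoloCover ψ U)
    (h₀ : φ 0 = ψ 0) : ‖deriv φ 0‖ = ‖deriv ψ 0‖ :=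
  le_antisymm (hψ.norm_deriv_zero_le hφ.1 hφ.2.1 h₀) (hφ.norm_deriv_zero_le hψ.1 hψ.2.1 h₀.symm)

lemma isHoloCover_comp_openPartialHomeomorph {e : OpenPartialHomeomorph ℂ ℂ}
    (hp : IsCoveringMapOn p U) (hsurj : U ⊆ range p) (hdiff : DifferentiableOn ℂ p (p ⁻¹' U))
    (hsource : e.source = ball 0 1) (htarget : e.target = p ⁻¹' U)
    (he : DifferentiableOn ℂ e e.source) : IsHoloCover (p ∘ e) U := by
  have hmaps : MapsTo e (ball 0 1) (p ⁻¹' U) := hsource ▸ htarget ▸ e.mapsTo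
  let g : ball (0 : ℂ) 1 ≃ₜ p ⁻¹' U := ((Homeomorph.setCongr hsource).symm.trans
    e.toHomeomorphSourceTarget).trans (Homeomorph.setCongr htarget)
  refine isHoloCover_iff.2 ⟨hdiff.comp (hsource ▸ he) hmaps, hmaps, ?_, ?_⟩
  · exact hp.isCoveringMap_restrictPreimage.comp_homeomorph g
  · have hsurj' : Function.Surjective (U.restrictPreimage p) := fun y => by
      obtain ⟨x, hx⟩ := hsurj y.2
      exact ⟨⟨x, mem_preimage.2 (hx.symm ▸ y.2)⟩, Subtype.ext hx⟩
    exact hsurj'.comp g.surjective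

lemma IsHoloCover.openPartialHomeomorph_comp {e : OpenPartialHomeomorph ℂ ℂ}
    (hφ : IsHoloCover φ U) (hU : U ⊆ e.source) (he : DifferentiableOn ℂ e U) :
    IsHoloCover (e ∘ φ) (e '' U) := by
  obtain ⟨hdiff, hmaps, hcov, hsurj⟩ := isHoloCover_iff.1 hφ
  let g : U ≃ₜ e '' U := e.homeomorphOfImageSubsetSource hU rfl
  exact isHoloCover_iff.2 ⟨he.comp hdiff hmaps, (mapsTo_image e U).comp hmaps,
    hcov.homeomorph_comp g, g.surjective.comp hsurj⟩

end HoloCover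

section DiscInvolution

variable {a z : ℂ}

lemma one_sub_mul_ne_zero (ha : ‖a‖ < 1) (hz : ‖z‖ < 1) : 1 - a * z ≠ 0 := by
  refine sub_ne_zero.2 fun h => ?_
  have hlt : ‖a * z‖ < 1 := by
    rw [norm_mul]; exact mul_lt_one_of_nonneg_of_lt_one_left (norm_nonneg _) ha hz.le
  simp [← h] at hlt

lemma one_sub_conj_mul_ne_zero (ha : ‖a‖ < 1) (hz : ‖z‖ < 1) : 1 - conj a * z ≠ 0 :=
  one_sub_mul_ne_zero ((RCLike.norm_conj a).trans_lt ha) hz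

lemma norm_sub_div_one_sub_conj_mul_lt_one (ha : ‖a‖ < 1) (hz : ‖z‖ < 1) :
    ‖(a - z) / (1 - conj a * z)‖ < 1 := by
  have hid : ‖1 - conj a * z‖ ^ 2 - ‖a - z‖ ^ 2 = (1 - ‖a‖ ^ 2) * (1 - ‖z‖ ^ 2) := by
    simp only [← normSq_eq_norm_sq, normSq_apply, sub_re, sub_im, mul_re, mul_im, conj_re, conj_im,
      one_re, one_im]
    ring
  have ha2 : ‖a‖ ^ 2 < 1 := pow_lt_one₀ (norm_nonneg a) ha two_ne_zero
  have hz2 : ‖z‖ ^ 2 < 1 := pow_lt_one₀ (norm_nonneg z) hz two_ne_zero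
  rw [norm_div, div_lt_one (norm_pos_iff.2 (one_sub_conj_mul_ne_zero ha hz))]
  refine lt_of_pow_lt_pow_left₀ 2 (norm_nonneg _) ?_
  linarith [mul_pos (sub_pos.2 ha2) (sub_pos.2 hz2)]

lemma sub_div_one_sub_conj_mul_involutive (ha : ‖a‖ < 1) (hz : ‖z‖ < 1) :
    (a - (a - z) / (1 - conj a * z)) / (1 - conj a * ((a - z) / (1 - conj a * z))) = z := by
  have hden : 1 - conj a * z ≠ 0 := one_sub_conj_mul_ne_zero ha hz
  have hcancel : (a - z) / (1 - conj a * z) * (1 - conj a * z) = a - z := div_mul_cancel₀ _ hden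
  rw [div_eq_iff (one_sub_conj_mul_ne_zero ha (norm_sub_div_one_sub_conj_mul_lt_one ha hz))]
  linear_combination -hcancel

lemma hasDerivAt_sub_div_one_sub_conj_mul (h : 1 - conj a * z ≠ 0) :
    HasDerivAt (fun z => (a - z) / (1 - conj a * z))
      (-(1 - (‖a‖ : ℂ) ^ 2) / (1 - conj a * z) ^ 2) z := by
  refine (((hasDerivAt_id z).const_sub a).div
    (((hasDerivAt_id z).const_mul (conj a)).const_sub 1) h).congr_deriv ?_
  rw [← mul_conj']
  simp only [id_eq]
  ring

/-- The holomorphic involution `z ↦ (a - z) / (1 - conj a * z)` of the unit disc, which swaps `0`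
and `a`. -/
def discInvolution (a : ℂ) (ha : ‖a‖ < 1) : OpenPartialHomeomorph ℂ ℂ :=
  have hmaps : ∀ z ∈ ball (0 : ℂ) 1, (a - z) / (1 - conj a * z) ∈ ball (0 : ℂ) 1 := fun _ hz =>
    mem_ball_zero_iff.2 (norm_sub_div_one_sub_conj_mul_lt_one ha (mem_ball_zero_iff.1 hz))
  have hinv : ∀ z ∈ ball (0 : ℂ) 1, (a - (a - z) / (1 - conj a * z)) /
      (1 - conj a * ((a - z) / (1 - conj a * z))) = z := fun _ hz =>
    sub_div_one_sub_conj_mul_involutive ha (mem_ball_zero_iff.1 hz)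
  have hcont : ContinuousOn (fun z => (a - z) / (1 - conj a * z)) (ball 0 1) := fun _ hz =>
    (hasDerivAt_sub_div_one_sub_conj_mul (one_sub_conj_mul_ne_zero ha
      (mem_ball_zero_iff.1 hz))).continuousAt.continuousWithinAt
  { toFun z := (a - z) / (1 - conj a * z)
    invFun z := (a - z) / (1 - conj a * z)
    source := ball 0 1
    target := ball 0 1
    map_source' := hmaps
    map_target' := hmaps
    left_inv' := hinv
    right_inv' := hinv
    open_source := isOpen_ball
    open_target := isOpen_ball
    continuousOn_toFun := hcont
    continuousOn_invFun := hcont }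

lemma discInvolution_zero (ha : ‖a‖ < 1) : discInvolution a ha 0 = a := by
  change (a - 0) / (1 - conj a * 0) = a
  simp

lemma discInvolution_self (ha : ‖a‖ < 1) : discInvolution a ha a = 0 := by
  change (a - a) / (1 - conj a * a) = 0
  simp

lemma hasDerivAt_discInvolution (ha : ‖a‖ < 1) (hz : z ∈ ball 0 1) :
    HasDerivAt (discInvolution a ha) (-(1 - (‖a‖ : ℂ) ^ 2) / (1 - conj a * z) ^ 2) z :=
  hasDerivAt_sub_div_one_sub_conj_mul (one_sub_conj_mul_ne_zero ha (mem_ball_zero_iff.1 hz))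

lemma discInvolution_image_diff_zero (ha : ‖a‖ < 1) :
    discInvolution a ha '' (ball 0 1 \ {0}) = ball 0 1 \ {a} := by
  have hzero : {(0 : ℂ)} ⊆ (discInvolution a ha).source :=
    singleton_subset_iff.2 (mem_ball_self one_pos)
  rw [show ball (0 : ℂ) 1 = (discInvolution a ha).source from rfl,
    (discInvolution a ha).injOn.image_sdiff_subset hzero, image_singleton, discInvolution_zero,
    (discInvolution a ha).image_source_eq_target]
  rfl

end DiscInvolution

section CayleyTransform

variable {w₀ w z : ℂ}

lemma one_sub_ne_zero_of_norm_lt_one (hz : ‖z‖ < 1) : 1 - z ≠ 0 :=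
  sub_ne_zero.2 fun h => by simp [← h] at hz

lemma add_conj_ne_zero (hw₀ : w₀.re < 0) (hw : w.re < 0) : w + conj w₀ ≠ 0 := fun h => by
  have := congrArg re h
  simp only [add_re, conj_re, zero_re] at this
  linarith

lemma re_add_conj_mul_div_one_sub (w₀ z : ℂ) :
    ((w₀ + conj w₀ * z) / (1 - z)).re = w₀.re * (1 - ‖z‖ ^ 2) / ‖1 - z‖ ^ 2 := by
  simp only [div_re, ← normSq_eq_norm_sq, ← add_div]
  congr 1
  simp only [normSq_apply, add_re, add_im, sub_re, sub_im, mul_re, mul_im, conj_re, conj_im, one_re,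
    one_im]
  ring

lemma norm_sub_lt_norm_add_conj (hw₀ : w₀.re < 0) (hw : w.re < 0) : ‖w - w₀‖ < ‖w + conj w₀‖ := by
  have hid : ‖w + conj w₀‖ ^ 2 - ‖w - w₀‖ ^ 2 = 4 * (w.re * w₀.re) := by
    simp only [← normSq_eq_norm_sq, normSq_apply, add_re, add_im, sub_re, sub_im, conj_re, conj_im]
    ring
  refine lt_of_pow_lt_pow_left₀ 2 (norm_nonneg _) ?_
  linarith [mul_pos_of_neg_of_neg hw hw₀]

lemma hasDerivAt_add_conj_mul_div_one_sub (hz : 1 - z ≠ 0) :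
    HasDerivAt (fun z => (w₀ + conj w₀ * z) / (1 - z)) (2 * w₀.re / (1 - z) ^ 2) z := by
  refine ((((hasDerivAt_id z).const_mul (conj w₀)).const_add w₀).div
    ((hasDerivAt_id z).const_sub 1) hz).congr_deriv ?_
  rw [show (2 * w₀.re : ℂ) = w₀ + conj w₀ by rw [add_conj]; push_cast; rfl]
  simp only [id_eq]
  ring

/-- The Cayley transform of the unit disc onto the left half-plane which sends `0` to `w₀`. -/
def cayleyTransform (w₀ : ℂ) (hw₀ : w₀.re < 0) : OpenPartialHomeomorph ℂ ℂ where
  toFun z := (w₀ + conj w₀ * z) / (1 - z)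
  invFun w := (w - w₀) / (w + conj w₀)
  source := ball 0 1
  target := {w | w.re < 0}
  map_source' z hz := by
    have hz' := mem_ball_zero_iff.1 hz
    rw [mem_ofPred_eq, re_add_conj_mul_div_one_sub]
    exact div_neg_of_neg_of_pos
      (mul_neg_of_neg_of_pos hw₀ (sub_pos.2 (pow_lt_one₀ (norm_nonneg z) hz' two_ne_zero)))
      (pow_pos (norm_pos_iff.2 (one_sub_ne_zero_of_norm_lt_one hz')) 2)
  map_target' w hw := by
    rw [mem_ball_zero_iff, norm_div, div_lt_one (norm_pos_iff.2 (add_conj_ne_zero hw₀ hw))]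
    exact norm_sub_lt_norm_add_conj hw₀ hw
  left_inv' z hz := by
    have hz' := one_sub_ne_zero_of_norm_lt_one (mem_ball_zero_iff.1 hz)
    have hw₀' := add_conj_ne_zero hw₀ hw₀
    rw [div_sub' hz', div_add' _ _ _ hz', div_div_div_cancel_right₀ hz', div_eq_iff]
    · ring
    · convert! hw₀' using 1
      ring
  right_inv' w hw := by
    have hw' := add_conj_ne_zero hw₀ hw
    have hw₀' := add_conj_ne_zero hw₀ hw₀
    rw [mul_div_assoc', add_div' _ _ _ hw', one_sub_div hw', div_div_div_cancel_right₀ hw',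
      div_eq_iff]
    · ring
    · convert! hw₀' using 1
      ring
  open_source := isOpen_ball
  open_target := isOpen_lt continuous_re continuous_const
  continuousOn_toFun _ hz := (hasDerivAt_add_conj_mul_div_one_sub (one_sub_ne_zero_of_norm_lt_one
    (mem_ball_zero_iff.1 hz))).continuousAt.continuousWithinAt
  continuousOn_invFun := by
    exact (continuousOn_id.sub continuousOn_const).div (continuousOn_id.add continuousOn_const)
      fun _ hw => add_conj_ne_zero hw₀ hw

lemma cayleyTransform_zero (hw₀ : w₀.re < 0) : cayleyTransform w₀ hw₀ 0 = w₀ := by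
  change (w₀ + conj w₀ * 0) / (1 - 0) = w₀
  simp

lemma hasDerivAt_cayleyTransform (hw₀ : w₀.re < 0) (hz : z ∈ ball 0 1) :
    HasDerivAt (cayleyTransform w₀ hw₀) (2 * w₀.re / (1 - z) ^ 2) z :=
  hasDerivAt_add_conj_mul_div_one_sub (one_sub_ne_zero_of_norm_lt_one (mem_ball_zero_iff.1 hz))

end CayleyTransform

section PuncturedDisc

lemma exp_preimage_ball_diff_zero : exp ⁻¹' (ball 0 1 \ {0}) = {w | w.re < 0} := by
  ext w
  simp [norm_exp]

lemma isHoloCover_exp_comp_cayleyTransform {w₀ : ℂ} (hw₀ : w₀.re < 0) :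
    IsHoloCover (exp ∘ cayleyTransform w₀ hw₀) (ball 0 1 \ {0}) :=
  isHoloCover_comp_openPartialHomeomorph (isCoveringMapOn_exp.mono fun _ hz => hz.2)
    (fun _ hz => range_exp ▸ hz.2) differentiable_exp.differentiableOn rfl
    exp_preimage_ball_diff_zero.symm
    fun _ hz => (hasDerivAt_cayleyTransform hw₀ hz).differentiableAt.differentiableWithinAt

lemma IsHoloCover.discInvolution_comp {φ : ℂ → ℂ} (hφ : IsHoloCover φ (ball 0 1 \ {0})) {a : ℂ}
    (ha : ‖a‖ < 1) : IsHoloCover (discInvolution a ha ∘ φ) (ball 0 1 \ {a}) :=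
  discInvolution_image_diff_zero ha ▸ hφ.openPartialHomeomorph_comp (e := discInvolution a ha)
    sdiff_subset fun _ hz =>
      (hasDerivAt_discInvolution ha hz.1).differentiableAt.differentiableWithinAt

/-- The holomorphic universal cover of the unit disc punctured at `exp w₀`, normalized to fix `0`;
the puncture is given through its logarithm `w₀`. -/
def puncturedDiscCover (w₀ : ℂ) (hw₀ : w₀.re < 0) : ℂ → ℂ :=
  discInvolution (exp w₀) (by simpa [norm_exp]) ∘ exp ∘ cayleyTransform w₀ hw₀

variable {w₀ : ℂ}

lemma isHoloCover_puncturedDiscCover (hw₀ : w₀.re < 0) :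
    IsHoloCover (puncturedDiscCover w₀ hw₀) (ball 0 1 \ {exp w₀}) :=
  (isHoloCover_exp_comp_cayleyTransform hw₀).discInvolution_comp _

lemma puncturedDiscCover_zero (hw₀ : w₀.re < 0) : puncturedDiscCover w₀ hw₀ 0 = 0 := by
  simp only [puncturedDiscCover, Function.comp_apply, cayleyTransform_zero, discInvolution_self]

lemma hasDerivAt_puncturedDiscCover_zero (hw₀ : w₀.re < 0) :
    HasDerivAt (puncturedDiscCover w₀ hw₀)
      (-(exp w₀ * (2 * w₀.re) / (1 - (‖exp w₀‖ : ℂ) ^ 2))) 0 := by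
  have hlt : ‖exp w₀‖ < 1 := by simpa [norm_exp]
  have hne : 1 - (‖exp w₀‖ : ℂ) ^ 2 ≠ 0 := by
    rw [← conj_mul']
    exact one_sub_conj_mul_ne_zero hlt hlt
  have hC := (hasDerivAt_cayleyTransform hw₀ (mem_ball_self one_pos)).cexp
  have hT := hasDerivAt_discInvolution hlt (mem_ball_zero_iff.2 hlt)
  refine (hT.comp_of_eq 0 hC (by rw [cayleyTransform_zero])).congr_deriv ?_
  rw [conj_mul', cayleyTransform_zero]
  field_simp
  ring

lemma norm_deriv_puncturedDiscCover_zero (hw₀ : w₀.re < 0) :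
    ‖deriv (puncturedDiscCover w₀ hw₀) 0‖ = w₀.re / Real.sinh w₀.re := by
  have hden : 1 - Real.exp w₀.re ^ 2 = -(2 * Real.exp w₀.re * Real.sinh w₀.re) := by
    have hinv : Real.exp w₀.re * Real.exp (-w₀.re) = 1 := by rw [← Real.exp_add]; simp
    rw [Real.sinh_eq]
    linear_combination -hinv
  have hexp : Real.exp w₀.re < 1 := Real.exp_lt_one_iff.2 hw₀
  have hnorm : ‖1 - (Real.exp w₀.re : ℂ) ^ 2‖ = 1 - Real.exp w₀.re ^ 2 := by
    rw [← ofReal_one, ← ofReal_pow, ← ofReal_sub, norm_real, Real.norm_of_nonneg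
      (sub_nonneg.2 (pow_le_one₀ (Real.exp_pos _).le hexp.le))]
  rw [(hasDerivAt_puncturedDiscCover_zero hw₀).deriv, norm_neg, norm_div, norm_exp, hnorm, hden,
    norm_mul, norm_mul, norm_exp, norm_ofNat, norm_real, Real.norm_of_nonpos hw₀.le]
  field_simp [(Real.sinh_neg_iff.2 hw₀).ne]

end PuncturedDisc

theorem stmt0_general (u : ℝ) (hu : 0 < u) (a : ℂ) (ha : ‖a‖ = Real.exp (-u)) (φ : ℂ → ℂ)
    (hφ : IsHoloCover φ (Metric.ball 0 1 \ {a})) (hφ0 : φ 0 = 0) :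
    ‖deriv φ 0‖ = u / Real.sinh u := by
  have ha0 : a ≠ 0 := norm_pos_iff.1 (ha ▸ Real.exp_pos _)
  have hre : (log a).re = -u := by rw [log_re, ha, Real.log_exp]
  have hneg : (log a).re < 0 := hre ▸ neg_lt_zero.2 hu
  have hcover : IsHoloCover (puncturedDiscCover (log a) hneg) (ball 0 1 \ {a}) := by
    simpa only [exp_log ha0] using isHoloCover_puncturedDiscCover hneg
  rw [hφ.norm_deriv_zero_eq hcover (hφ0.trans (puncturedDiscCover_zero hneg).symm),
    norm_deriv_puncturedDiscCover_zero, hre, Real.sinh_neg, neg_div_neg_eq]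

/-- For `u > 0` and `x = e^{-u}`, every holomorphic covering map
`φ : 𝔻 → 𝔻 \ {x}` with `φ 0 = 0` satisfies `|φ'(0)| = u / sinh u`. -/
theorem stmt0 (u : ℝ) (hu : 0 < u) (φ : ℂ → ℂ)
    (hφ : IsHoloCover φ (Metric.ball 0 1 \ {((Real.exp (-u) : ℝ) : ℂ)}))
    (hφ0 : φ 0 = 0) :
    ‖deriv φ 0‖ = u / Real.sinh u :=
  stmt0_general u hu _ (by rw [norm_real, Real.norm_of_nonneg (Real.exp_pos _).le]) φ hφ hφ0
end
end

section
/- For every u ∈ (0, π], the quantity −ln(u/sinh(u))/u² = ln(sinh(u)/u)/u² lies in the interval [0.13, 1/6]. -/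
/-!
Euler's product `sinh u / u = ∏ (1 + u² / (k π)²)` turns `log (sinh u / u)` into the series
`∑ log (1 + u² / (k π)²)`. By Bernoulli's inequality `x ↦ log (1 + a x) / x` decreases, so
`log (sinh u / u) / u²` decreases in `|u|`: on `|u| ≤ π` it is smallest at `u = π`, where a partial
sum of the power series of `sinh` suffices. The upper bound is `log (1 + x) ≤ x` summed over the
series, since `∑ 1 / (k π)² = 1 / 6`.
-/

open Real Filter Topology

theorem antitoneOn_log_one_add_mul_div {a : ℝ} (ha : 0 ≤ a) :
    AntitoneOn (fun x ↦ log (1 + a * x) / x) (Set.Ioi 0) := by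
  intro x (hx : 0 < x) y (hy : 0 < y) hxy
  have bernoulli : (1 + a * y) ^ (x / y) ≤ 1 + a * x := by
    calc (1 + a * y) ^ (x / y) ≤ 1 + x / y * (a * y) :=
          rpow_one_add_le_one_add_mul_self (by linarith [mul_nonneg ha hy.le])
            (by positivity) ((div_le_one hy).2 hxy)
      _ = 1 + a * x := by field_simp
  have log_bernoulli : x / y * log (1 + a * y) ≤ log (1 + a * x) := by
    rw [← log_rpow (by positivity)]
    exact log_le_log (by positivity) bernoulli
  change log (1 + a * y) / y ≤ log (1 + a * x) / x
  rw [le_div_iff₀ hx]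
  calc log (1 + a * y) / y * x = x / y * log (1 + a * y) := by ring
    _ ≤ log (1 + a * x) := log_bernoulli

theorem tendsto_euler_sinh_prod {u : ℝ} (hu : u ≠ 0) :
    Tendsto (fun n : ℕ ↦ ∏ k ∈ Finset.range n, (1 + u ^ 2 / (π * (k + 1)) ^ 2)) atTop
      (𝓝 (sinh u / u)) := by
  have hπ : (π : ℂ) ≠ 0 := Complex.ofReal_ne_zero.2 pi_ne_zero
  have hz : (u / π * Complex.I : ℂ) ≠ 0 :=
    mul_ne_zero (div_ne_zero (Complex.ofReal_ne_zero.2 hu) hπ) Complex.I_ne_zero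
  have hsin : Complex.sin (π * (u / π * Complex.I)) / (π * (u / π * Complex.I)) =
      ((sinh u / u : ℝ) : ℂ) := by
    rw [← mul_assoc, mul_div_cancel₀ _ hπ, Complex.sin_mul_I,
      mul_div_mul_right _ _ Complex.I_ne_zero, Complex.ofReal_div, Complex.ofReal_sinh]
  have hfactor (k : ℕ) : 1 + sineTerm (u / π * Complex.I) k =
      ((1 + u ^ 2 / (π * (k + 1)) ^ 2 : ℝ) : ℂ) := by
    push_cast
    rw [sineTerm, mul_pow (u / π : ℂ), Complex.I_sq, mul_neg_one, neg_neg, div_pow, div_div,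
      mul_pow]
  have hprod := tendsto_euler_sin_prod' hz
  simp only [hfactor, hsin, ← Complex.ofReal_prod] at hprod
  exact tendsto_ofReal_iff.1 hprod

theorem hasSum_log_sinh_div {u : ℝ} (hu : u ≠ 0) :
    HasSum (fun k : ℕ ↦ log (1 + u ^ 2 / (π * (k + 1)) ^ 2)) (log (sinh u / u)) := by
  have one_le_factor (k : ℕ) : 1 ≤ 1 + u ^ 2 / (π * (k + 1)) ^ 2 :=
    le_add_of_nonneg_right (by positivity)
  have one_le_limit : 1 ≤ sinh u / u :=
    ge_of_tendsto' (tendsto_euler_sinh_prod hu) fun _ ↦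
      Finset.one_le_prod fun k _ ↦ one_le_factor k
  rw [hasSum_iff_tendsto_nat_of_nonneg fun k ↦ log_nonneg (one_le_factor k)]
  refine ((tendsto_euler_sinh_prod hu).log (by positivity)).congr fun n ↦ ?_
  exact log_prod fun k _ ↦ (zero_lt_one.trans_le (one_le_factor k)).ne'

theorem log_sinh_div_div_sq_le_of_abs_le {u v : ℝ} (hu : u ≠ 0) (huv : |u| ≤ |v|) :
    log (sinh v / v) / v ^ 2 ≤ log (sinh u / u) / u ^ 2 := by
  have hv : v ≠ 0 := abs_pos.1 ((abs_pos.2 hu).trans_le huv)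
  refine hasSum_le (fun k ↦ ?_) ((hasSum_log_sinh_div hv).div_const (v ^ 2))
    ((hasSum_log_sinh_div hu).div_const (u ^ 2))
  have := antitoneOn_log_one_add_mul_div (a := 1 / (π * (k + 1)) ^ 2) (by positivity)
    (sq_pos_of_ne_zero hu) (sq_pos_of_ne_zero hv) (sq_le_sq.2 huv)
  simpa only [one_div_mul_eq_div] using this

theorem hasSum_one_div_pi_mul_succ_sq :
    HasSum (fun k : ℕ ↦ 1 / (π * (k + 1)) ^ 2) (1 / 6) := by
  have basel : HasSum (fun k : ℕ ↦ 1 / ((k + 1 : ℕ) : ℝ) ^ 2) (π ^ 2 / 6) := by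
    simpa using (hasSum_nat_add_iff' 1).2 hasSum_zeta_two
  convert! basel.div_const (π ^ 2) using 1
  · ext k
    push_cast
    rw [mul_pow, div_div, mul_comm]
  · field_simp

theorem log_sinh_div_le {u : ℝ} (hu : u ≠ 0) : log (sinh u / u) ≤ u ^ 2 / 6 := by
  have hsum : HasSum (fun k : ℕ ↦ u ^ 2 / (π * (k + 1)) ^ 2) (u ^ 2 / 6) := by
    simpa only [mul_one_div] using hasSum_one_div_pi_mul_succ_sq.mul_left (u ^ 2)
  refine hasSum_le (fun k ↦ ?_) (hasSum_log_sinh_div hu) hsum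
  exact (log_le_sub_one_of_pos (by positivity)).trans_eq (add_sub_cancel_left _ _)

theorem sum_range_le_sinh {x : ℝ} (hx : 0 ≤ x) (n : ℕ) :
    ∑ k ∈ Finset.range n, x ^ (2 * k + 1) / (2 * k + 1).factorial ≤ sinh x :=
  sum_le_hasSum _ (fun _ _ ↦ by positivity) (hasSum_sinh x)

theorem le_sinh_pi_div_pi : 729 / 200 ≤ sinh π / π := by
  have hsq : (9.869 : ℝ) ≤ π ^ 2 := by nlinarith [pi_gt_d4]
  calc (729 / 200 : ℝ) ≤ 1 + 9.869 / 6 + 9.869 ^ 2 / 120 + 9.869 ^ 3 / 5040 := by norm_num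
    _ ≤ 1 + π ^ 2 / 6 + (π ^ 2) ^ 2 / 120 + (π ^ 2) ^ 3 / 5040 := by gcongr
    _ = (∑ k ∈ Finset.range 4, π ^ (2 * k + 1) / (2 * k + 1).factorial) / π := by
      simp only [Finset.sum_range_succ, Finset.sum_range_zero, Nat.factorial]
      field_simp
      norm_num
      ring
    _ ≤ sinh π / π := by gcongr; exact sum_range_le_sinh pi_nonneg 4

theorem le_log_sinh_pi_div_pi_div_sq : 0.13 ≤ log (sinh π / π) / π ^ 2 := by
  rw [le_div_iff₀ (by positivity)]
  -- `729 / 200` is a lower approximation of `sinh π / π ≈ 3.676` whose only prime factors are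
  -- `2`, `3` and `5`, so that bounds for its logarithm are available.
  have hlog : log (729 / 200) = 6 * log 3 - 3 * log 2 - 2 * log 5 := by
    rw [show (729 / 200 : ℝ) = 3 ^ 6 / (2 ^ 3 * 5 ^ 2) by norm_num,
      log_div (by norm_num) (by norm_num), log_mul (by norm_num) (by norm_num)]
    simp only [log_pow]
    push_cast
    ring
  calc 0.13 * π ^ 2 ≤ 0.13 * 3.1416 ^ 2 := by gcongr; exact pi_lt_d4.le
    _ ≤ 6 * log 3 - 3 * log 2 - 2 * log 5 := by
      linarith [log_three_gt_d9, log_two_lt_d9, log_five_lt_d9]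
    _ = log (729 / 200) := hlog.symm
    _ ≤ log (sinh π / π) := log_le_log (by norm_num) le_sinh_pi_div_pi

theorem stmt2_general {u : ℝ} (hu : u ≠ 0) (huπ : |u| ≤ π) :
    -log (u / sinh u) / u ^ 2 = log (sinh u / u) / u ^ 2 ∧
    log (sinh u / u) / u ^ 2 ∈ Set.Icc (0.13 : ℝ) (1 / 6) := by
  refine ⟨by rw [← log_inv, inv_div], ?lower, ?upper⟩
  case lower =>
    exact le_log_sinh_pi_div_pi_div_sq.trans
      (log_sinh_div_div_sq_le_of_abs_le hu (huπ.trans (le_abs_self π)))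
  case upper =>
    rw [div_le_iff₀ (by positivity), one_div_mul_eq_div]
    exact log_sinh_div_le hu

/-- For every `u ∈ (0, π]`, the quantity `-ln(u/sinh u)/u² = ln(sinh u/u)/u²`
lies in `[0.13, 1/6]`. -/
theorem stmt2 (u : ℝ) (h1 : 0 < u) (h2 : u ≤ Real.pi) :
    -Real.log (u / Real.sinh u) / u ^ 2 = Real.log (Real.sinh u / u) / u ^ 2 ∧
    Real.log (Real.sinh u / u) / u ^ 2 ∈ Set.Icc (0.13 : ℝ) (1 / 6) :=
  stmt2_general h1.ne' ((abs_of_pos h1).trans_le h2)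
end

section
/- Let O ⊆ ℂ be an open set satisfying O + 2πi = O and containing the half-plane {z : Re z < −π}. Then there exists a finite or countable family of points (w_i)_{i∈I} with Re w_i < 0 and w_i ∉ O such that the triangles T(w_i) are pairwise disjoint in the quotient ℂ/2πiℤ, and ⋃_{w ∉ O, Re w < 0} T(w) ⊆ ⋃_{i∈I} ⋃_{k∈ℤ} (T₅(w_i) + 2πik). Consequently, Σ_{i∈I} area(T(w_i)) ≤ area in the quotient of ⋃_{w ∉ O, Re w < 0} T(w) ≤ 25 · Σ_{i∈I} area(T(w_i)). -/
open Complex Metric Set MeasureTheory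

noncomputable section

/-- The closed right isosceles triangle with right-angle vertex `w`, hypotenuse
on the imaginary axis. -/
def Tri (w : ℂ) : Set ℂ := {z : ℂ | z.re ≤ 0 ∧ |z.im - w.im| ≤ z.re - w.re}

/-- `T₅(w) = T(5 Re w + i Im w)`, the triangle with base 5 times larger. -/
def Tri5 (w : ℂ) : Set ℂ := Tri (((5 * w.re : ℝ) : ℂ) + (w.im : ℂ) * Complex.I)

/-- Area of a subset of `ℂ` measured in the quotient `ℂ / 2πiℤ`. -/
def quotArea (S : Set ℂ) : ENNReal :=
  MeasureTheory.volume
    ((⋃ k : ℤ, (fun z : ℂ => z + 2 * Real.pi * Complex.I * k) '' S) ∩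
      {z : ℂ | 0 ≤ z.im ∧ z.im < 2 * Real.pi})

/-- Disjointness of two subsets of `ℂ` viewed in the quotient `ℂ / 2πiℤ`. -/
def QuotDisjoint (S₁ S₂ : Set ℂ) : Prop :=
  Disjoint (⋃ k : ℤ, (fun z : ℂ => z + 2 * Real.pi * Complex.I * k) '' S₁) S₂

/-!
Apply the Vitali covering argument in the cylinder `ℂ / 2πiℤ`, selecting among the images of the
triangles `T(w)` a disjoint subfamily with the enlargement factor `2` for the sizes `|Re w|`: if
`T(a)` meets `T(b)` and `|Re a| ≤ 2 |Re b|`, then `T(a) ⊆ T₅(b)`. Disjoint triangles have disjoint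
nonempty interiors, so the subfamily is countable. Projecting to the cylinder does not increase
area, which gives the upper bound; it preserves the area of `T(w)` when `-π ≤ Re w`, because the
translates of `T(w)` by distinct multiples of `2πi` then meet in at most a point, which gives the
lower bound.
-/

open scoped Function Pointwise

section QuotientMeasure

variable {E : Type*} [AddCommGroup E] {Γ : AddSubgroup E} {S : Set E}

lemma preimage_image_mk_eq_iUnion_vadd (S : Set E) :
    ((↑) : E → E ⧸ Γ) ⁻¹' ((↑) '' S) = ⋃ g : Γ, g +ᵥ S := by
  rw [QuotientAddGroup.preimage_image_mk_eq_iUnion_image]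
  exact iUnion_congr fun g => image_congr fun x _ => add_comm x g

variable [MeasurableSpace E] [MeasurableAdd E] [Countable Γ]

lemma measurableSet_image_mk (hS : MeasurableSet S) :
    MeasurableSet (((↑) : E → E ⧸ Γ) '' S) := by
  change MeasurableSet (((↑) : E → E ⧸ Γ) ⁻¹' _)
  rw [preimage_image_mk_eq_iUnion_vadd]
  exact MeasurableSet.iUnion fun g => hS.const_vadd g

lemma map_mk_restrict_image_mk (μ : Measure E) (F : Set E) (hS : MeasurableSet S) :
    (μ.restrict F).map ((↑) : E → E ⧸ Γ) ((↑) '' S) =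
      μ (((↑) : E → E ⧸ Γ) ⁻¹' ((↑) '' S) ∩ F) := by
  have hmeas : MeasurableSet (((↑) : E → E ⧸ Γ) '' S) := measurableSet_image_mk hS
  rw [Measure.map_apply measurable_quotient_mk'' hmeas,
    Measure.restrict_apply (measurable_quotient_mk'' hmeas)]

variable {μ : Measure E} [μ.IsAddLeftInvariant] {F : Set E}

lemma map_mk_restrict_image_mk_le (hF : IsAddFundamentalDomain Γ F μ) (hS : MeasurableSet S) :
    (μ.restrict F).map ((↑) : E → E ⧸ Γ) ((↑) '' S) ≤ μ S := by
  rw [map_mk_restrict_image_mk μ F hS, preimage_image_mk_eq_iUnion_vadd, iUnion_inter,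
    hF.measure_eq_tsum S]
  exact measure_iUnion_le _

lemma map_mk_restrict_image_mk_eq_of_aedisjoint (hF : IsAddFundamentalDomain Γ F μ)
    (hS : MeasurableSet S) (hdisj : ∀ g : Γ, g ≠ 0 → AEDisjoint μ (g +ᵥ S) S) :
    (μ.restrict F).map ((↑) : E → E ⧸ Γ) ((↑) '' S) = μ S := by
  have hpair : Pairwise (AEDisjoint μ on fun g : Γ => g +ᵥ S) :=
    Measure.pairwise_aedisjoint_of_aedisjoint_forall_ne_zero hdisj fun g =>
      (measurePreserving_vadd g μ).quasiMeasurePreserving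
  rw [map_mk_restrict_image_mk μ F hS, preimage_image_mk_eq_iUnion_vadd, iUnion_inter,
    hF.measure_eq_tsum S]
  exact measure_iUnion₀ (hpair.mono fun _ _ h => h.mono inter_subset_left inter_subset_left)
    fun g => (hS.const_vadd g).nullMeasurableSet.inter hF.nullMeasurableSet

end QuotientMeasure

section Cylinder

/-- The quotient `ℂ / 2πiℤ`. -/
abbrev Cylinder : Type := ℂ ⧸ AddSubgroup.zmultiples (2 * Real.pi * I : ℂ)

/-- The projection `ℂ → ℂ / 2πiℤ`. -/
abbrev toCylinder : ℂ → Cylinder := QuotientAddGroup.mk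

/-- The strip `0 ≤ Im z < 2π`, which represents every point of the cylinder exactly once. -/
def fundamentalStrip : Set ℂ := {z : ℂ | 0 ≤ z.im ∧ z.im < 2 * Real.pi}

/-- Lebesgue measure on the cylinder, defined as the image of Lebesgue measure on the strip
`0 ≤ Im z < 2π`; on the images of measurable sets it is `quotArea`, and it makes the measure
theory of the cylinder available for `quotArea`. -/
def cylinderVolume : Measure Cylinder := (volume.restrict fundamentalStrip).map toCylinder

lemma isAddFundamentalDomain_fundamentalStrip :
    IsAddFundamentalDomain (AddSubgroup.zmultiples (2 * Real.pi * I : ℂ)) fundamentalStrip := by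
  have hmeas : MeasurableSet fundamentalStrip := measurable_im measurableSet_Ico
  refine .mk' hmeas.nullMeasurableSet fun z => ?_
  have hinj : Function.Injective fun n : ℤ => n • (2 * Real.pi * I : ℂ) :=
    smul_left_injective ℤ two_pi_I_ne_zero
  refine (Equiv.ofInjective _ hinj).bijective.existsUnique_iff.2 ?_
  change ∃! n : ℤ, n • (2 * Real.pi * I : ℂ) + z ∈ fundamentalStrip
  simpa [fundamentalStrip, add_comm] using
    existsUnique_add_zsmul_mem_Ico Real.two_pi_pos z.im 0

lemma toCylinder_eq_iff {z w : ℂ} :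
    toCylinder z = toCylinder w ↔ ∃ k : ℤ, z + 2 * Real.pi * I * k = w := by
  simp only [QuotientAddGroup.eq, AddSubgroup.mem_zmultiples_iff, zsmul_eq_mul,
    eq_neg_add_iff_add_eq, mul_comm]

lemma iUnion_translates_eq_preimage_image (S : Set ℂ) :
    (⋃ k : ℤ, (fun z : ℂ => z + 2 * Real.pi * I * k) '' S) = toCylinder ⁻¹' (toCylinder '' S) := by
  ext z
  simp only [mem_iUnion, mem_image, mem_preimage, toCylinder_eq_iff]
  tauto

lemma quotDisjoint_iff {S T : Set ℂ} :
    QuotDisjoint S T ↔ Disjoint (toCylinder '' S) (toCylinder '' T) := by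
  rw [QuotDisjoint, iUnion_translates_eq_preimage_image, disjoint_image_right]

lemma quotArea_eq_volume_preimage_image (S : Set ℂ) :
    quotArea S = volume (toCylinder ⁻¹' (toCylinder '' S) ∩ fundamentalStrip) := by
  rw [← iUnion_translates_eq_preimage_image]
  rfl

lemma quotArea_mono {S T : Set ℂ} (h : S ⊆ T) : quotArea S ≤ quotArea T := by
  simp only [quotArea_eq_volume_preimage_image]
  gcongr

lemma cylinderVolume_image {S : Set ℂ} (hS : MeasurableSet S) :
    cylinderVolume (toCylinder '' S) = quotArea S := by
  rw [quotArea_eq_volume_preimage_image]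
  exact map_mk_restrict_image_mk volume fundamentalStrip hS

lemma quotArea_le_cylinderVolume_image (S : Set ℂ) :
    quotArea S ≤ cylinderVolume (toCylinder '' S) := by
  rw [quotArea_eq_volume_preimage_image]
  exact (Measure.le_restrict_apply _ _).trans
    (Measure.le_map_apply measurable_quotient_mk''.aemeasurable _)

end Cylinder

lemma volume_eq_lintegral_volume_vertical_slice {S : Set ℂ} (hS : MeasurableSet S) :
    volume S = ∫⁻ x : ℝ, volume {y : ℝ | (⟨x, y⟩ : ℂ) ∈ S} := by
  rw [← volume_preserving_equiv_real_prod.symm.measure_preimage hS.nullMeasurableSet,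
    Measure.volume_eq_prod, Measure.prod_apply (measurableEquivRealProd.symm.measurable hS)]
  rfl

section Triangle

variable {a b c w : ℂ}

lemma measurableSet_tri (w : ℂ) : MeasurableSet (Tri w) := by
  have him : Measurable fun z : ℂ => |z.im - w.im| := by fun_prop
  exact (measurableSet_le measurable_re measurable_const).inter
    (measurableSet_le him (measurable_re.sub_const _))

lemma volume_tri_vertical_slice (w : ℂ) (x : ℝ) :
    volume {y : ℝ | (⟨x, y⟩ : ℂ) ∈ Tri w} =
      (Icc w.re 0).indicator (fun x => ENNReal.ofReal (2 * (x - w.re))) x := by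
  by_cases hx : x ≤ 0
  · have hslice : {y : ℝ | (⟨x, y⟩ : ℂ) ∈ Tri w} = closedBall w.im (x - w.re) := by
      ext y
      simp [Tri, hx, Real.dist_eq]
    rw [hslice, Real.volume_closedBall]
    by_cases hwx : w.re ≤ x
    · rw [indicator_of_mem (mem_Icc.2 ⟨hwx, hx⟩)]
    · rw [indicator_of_notMem fun h => hwx h.1, ENNReal.ofReal_of_nonpos (by linarith)]
  · rw [indicator_of_notMem fun h => hx h.2]
    simp [Tri, hx]

lemma volume_tri (hw : w.re ≤ 0) : volume (Tri w) = ENNReal.ofReal (w.re ^ 2) := by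
  have hint : ∫ x in w.re..0, 2 * (x - w.re) = w.re ^ 2 := by
    rw [intervalIntegral.integral_const_mul,
      intervalIntegral.integral_comp_sub_right (fun x => x), integral_id]
    ring
  simp_rw [volume_eq_lintegral_volume_vertical_slice (measurableSet_tri w),
    volume_tri_vertical_slice]
  rw [lintegral_indicator measurableSet_Icc, ← ofReal_integral_eq_lintegral_ofReal,
    integral_Icc_eq_integral_Ioc, ← intervalIntegral.integral_of_le hw, hint]
  · exact (by fun_prop : Continuous fun x : ℝ => 2 * (x - w.re)).integrableOn_Icc
  · filter_upwards [ae_restrict_mem measurableSet_Icc] with x hx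
    simpa using hx.1

lemma volume_tri5 (hw : w.re ≤ 0) : volume (Tri5 w) = 25 * ENNReal.ofReal (w.re ^ 2) := by
  have hre : (((5 * w.re : ℝ) : ℂ) + (w.im : ℂ) * I).re = 5 * w.re := by simp
  have h25 : (25 : ENNReal) = ENNReal.ofReal (5 ^ 2) := by norm_num
  rw [Tri5, volume_tri (by linarith), hre, mul_pow, ENNReal.ofReal_mul (by norm_num), h25]

lemma interior_tri_nonempty (hw : w.re < 0) : (interior (Tri w)).Nonempty := by
  have him : Continuous fun z : ℂ => |z.im - w.im| := by fun_prop
  have hopen : IsOpen {z : ℂ | z.re < 0 ∧ |z.im - w.im| < z.re - w.re} :=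
    (isOpen_lt continuous_re continuous_const).inter
      (isOpen_lt him (continuous_re.sub continuous_const))
  refine ⟨⟨w.re / 2, w.im⟩, interior_maximal ?_ hopen ?_⟩
  · exact fun z hz => ⟨hz.1.le, hz.2.le⟩
  · change w.re / 2 < 0 ∧ |w.im - w.im| < w.re / 2 - w.re
    rw [sub_self, abs_zero]
    constructor <;> linarith

lemma vadd_tri (hc : c.re = 0) (w : ℂ) : c +ᵥ Tri w = Tri (c + w) := by
  ext z
  simp [mem_vadd_set_iff_neg_vadd_mem, Tri, hc, neg_add_eq_sub, sub_sub]

lemma tri_inter_tri_subsingleton (h : -(a.re + b.re) ≤ |a.im - b.im|) :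
    (Tri a ∩ Tri b).Subsingleton := by
  wlog hab : b.im ≤ a.im generalizing a b
  · rw [inter_comm]
    exact this (by rwa [add_comm, abs_sub_comm]) (le_of_not_ge hab)
  rw [abs_of_nonneg (sub_nonneg.2 hab)] at h
  have hcorner : ∀ z ∈ Tri a ∩ Tri b, z = ⟨0, a.im + a.re⟩ := by
    rintro z ⟨⟨hz, hza⟩, -, hzb⟩
    rw [abs_le] at hza hzb
    apply Complex.ext <;> dsimp only <;> linarith
  exact fun x hx y hy => (hcorner x hx).trans (hcorner y hy).symm

lemma mem_tri5 {z : ℂ} : z ∈ Tri5 w ↔ z.re ≤ 0 ∧ |z.im - w.im| ≤ z.re - 5 * w.re := by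
  simp [Tri5, Tri]

lemma tri_subset_tri5 (hne : (Tri a ∩ Tri b).Nonempty) (hab : 2 * b.re ≤ a.re) :
    Tri a ⊆ Tri5 b := by
  obtain ⟨z, ⟨hz, hza⟩, -, hzb⟩ := hne
  rintro x ⟨hx, hxa⟩
  refine mem_tri5.2 ⟨hx, ?_⟩
  rw [abs_le] at hza hzb hxa ⊢
  constructor <;> linarith

end Triangle

lemma image_toCylinder_tri_add (w : ℂ) (k : ℤ) :
    toCylinder '' Tri (2 * Real.pi * I * k + w) = toCylinder '' Tri w := by
  rw [← vadd_tri (by simp), ← image_vadd, image_image]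
  exact image_congr fun z _ => (toCylinder_eq_iff.2 ⟨k, add_comm _ _⟩).symm

lemma image_toCylinder_tri_subset_tri5 {a b : ℂ}
    (hne : (toCylinder '' Tri a ∩ toCylinder '' Tri b).Nonempty) (hab : 2 * b.re ≤ a.re) :
    toCylinder '' Tri a ⊆ toCylinder '' Tri5 b := by
  obtain ⟨-, ⟨x, hx, rfl⟩, y, hy, hyx⟩ := hne
  obtain ⟨k, rfl⟩ := toCylinder_eq_iff.1 hyx.symm
  have hmem : x + 2 * Real.pi * I * k ∈ Tri (2 * Real.pi * I * k + a) := by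
    rw [← vadd_tri (by simp), add_comm]
    exact vadd_mem_vadd_set hx
  rw [← image_toCylinder_tri_add a k]
  exact image_mono (tri_subset_tri5 ⟨_, hmem, hy⟩ (by simpa using hab))

lemma aedisjoint_vadd_tri {w : ℂ} (hw : -Real.pi ≤ w.re)
    {g : AddSubgroup.zmultiples (2 * Real.pi * I : ℂ)} (hg : g ≠ 0) :
    AEDisjoint volume (g +ᵥ Tri w) (Tri w) := by
  obtain ⟨_, k, rfl⟩ := g
  have hk : (1 : ℝ) ≤ |(k : ℝ)| := by
    have : k ≠ 0 := by
      rintro rfl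
      exact hg (by simp)
    exact_mod_cast Int.one_le_abs this
  change AEDisjoint volume (k • (2 * Real.pi * I : ℂ) +ᵥ Tri w) (Tri w)
  rw [vadd_tri (by simp)]
  refine (tri_inter_tri_subsingleton ?_).measure_zero volume
  have him : |(k • (2 * Real.pi * I : ℂ) + w).im - w.im| = |(k : ℝ)| * (2 * Real.pi) := by
    simp [abs_mul, abs_of_pos Real.pi_pos]
  have hre : (k • (2 * Real.pi * I : ℂ) + w).re = w.re := by simp
  rw [him, hre]
  nlinarith [Real.pi_pos]

lemma cylinderVolume_image_tri {w : ℂ} (hw : w.re ∈ Icc (-Real.pi) 0) :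
    cylinderVolume (toCylinder '' Tri w) = ENNReal.ofReal (w.re ^ 2) := by
  rw [← volume_tri hw.2]
  exact map_mk_restrict_image_mk_eq_of_aedisjoint isAddFundamentalDomain_fundamentalStrip
    (measurableSet_tri w) fun _ hg => aedisjoint_vadd_tri hw.1 hg

lemma cylinderVolume_image_tri5_le {w : ℂ} (hw : w.re ≤ 0) :
    cylinderVolume (toCylinder '' Tri5 w) ≤ 25 * ENNReal.ofReal (w.re ^ 2) := by
  rw [← volume_tri5 hw]
  exact map_mk_restrict_image_mk_le isAddFundamentalDomain_fundamentalStrip (measurableSet_tri _)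

lemma exists_disjoint_tri_subfamily_covering {A : Set ℂ} {R : ℝ}
    (hA : ∀ w ∈ A, w.re ∈ Ico (-R) 0) :
    ∃ S ⊆ A, S.Countable ∧ S.PairwiseDisjoint (fun w => toCylinder '' Tri w) ∧
      ∀ a ∈ A, ∃ b ∈ S, toCylinder '' Tri a ⊆ toCylinder '' Tri5 b := by
  have hint : ∀ w ∈ A, (interior (Tri w)).Nonempty := fun w hw => interior_tri_nonempty (hA w hw).2
  obtain ⟨S, hSA, hdisj, hcover⟩ := Vitali.exists_disjoint_subfamily_covering_enlargement
    (fun w => toCylinder '' Tri w) A (fun w => -w.re) 2 one_lt_two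
    (fun w hw => neg_nonneg.2 (hA w hw).2.le) R (fun w hw => neg_le.1 (hA w hw).1)
    (fun w hw => ((hint w hw).mono interior_subset).image _)
  have htri : S.PairwiseDisjoint Tri := fun a ha b hb hab => (hdisj ha hb hab).of_image
  refine ⟨S, hSA, htri.countable_of_nonempty_interior fun w hw => hint w (hSA hw), hdisj, ?_⟩
  intro a ha
  obtain ⟨b, hb, hne, hsize⟩ := hcover a ha
  exact ⟨b, hb, image_toCylinder_tri_subset_tri5 hne (by linarith)⟩

lemma quotArea_biUnion_tri {S : Set ℂ} (hS : S.Countable)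
    (hre : ∀ w ∈ S, w.re ∈ Icc (-Real.pi) 0)
    (hdisj : S.PairwiseDisjoint fun w => toCylinder '' Tri w) :
    quotArea (⋃ w ∈ S, Tri w) = ∑' w : S, ENNReal.ofReal ((w : ℂ).re ^ 2) := by
  rw [← cylinderVolume_image (.biUnion hS fun w _ => measurableSet_tri w), image_iUnion₂,
    measure_biUnion hS hdisj fun w _ => measurableSet_image_mk (measurableSet_tri w)]
  exact tsum_congr fun w => cylinderVolume_image_tri (hre w w.2)

lemma quotArea_le_of_image_subset_biUnion_tri5 {S U : Set ℂ} (hS : S.Countable)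
    (hre : ∀ w ∈ S, w.re ≤ 0) (hU : toCylinder '' U ⊆ ⋃ w ∈ S, toCylinder '' Tri5 w) :
    quotArea U ≤ 25 * ∑' w : S, ENNReal.ofReal ((w : ℂ).re ^ 2) :=
  calc quotArea U
      ≤ cylinderVolume (⋃ w ∈ S, toCylinder '' Tri5 w) :=
        (quotArea_le_cylinderVolume_image U).trans (measure_mono hU)
    _ ≤ ∑' w : S, cylinderVolume (toCylinder '' Tri5 w) := measure_biUnion_le _ hS _
    _ ≤ ∑' w : S, 25 * ENNReal.ofReal ((w : ℂ).re ^ 2) :=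
        ENNReal.tsum_le_tsum fun w => cylinderVolume_image_tri5_le (hre w w.2)
    _ = 25 * ∑' w : S, ENNReal.ofReal ((w : ℂ).re ^ 2) := ENNReal.tsum_mul_left

theorem stmt4_general {A : Set ℂ} (hA : ∀ w ∈ A, w.re ∈ Ico (-Real.pi) 0) :
    ∃ S ⊆ A, S.Countable ∧
      (S.Pairwise fun w₁ w₂ => QuotDisjoint (Tri w₁) (Tri w₂)) ∧
      ((⋃ w ∈ A, Tri w) ⊆
        ⋃ w ∈ S, ⋃ k : ℤ, (fun z : ℂ => z + 2 * Real.pi * I * k) '' Tri5 w) ∧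
      (∑' w : S, ENNReal.ofReal ((w : ℂ).re ^ 2) ≤ quotArea (⋃ w ∈ A, Tri w)) ∧
      quotArea (⋃ w ∈ A, Tri w) ≤ 25 * ∑' w : S, ENNReal.ofReal ((w : ℂ).re ^ 2) := by
  obtain ⟨S, hSA, hS, hdisj, hcover⟩ := exists_disjoint_tri_subfamily_covering hA
  have hre : ∀ w ∈ S, w.re ∈ Icc (-Real.pi) 0 := fun w hw => Ico_subset_Icc_self (hA w (hSA hw))
  have himage : toCylinder '' (⋃ w ∈ A, Tri w) ⊆ ⋃ w ∈ S, toCylinder '' Tri5 w := by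
    rw [image_iUnion₂]
    refine iUnion₂_subset fun a ha => ?_
    obtain ⟨b, hb, hab⟩ := hcover a ha
    exact hab.trans (subset_biUnion_of_mem (u := fun w => toCylinder '' Tri5 w) hb)
  refine ⟨S, hSA, hS, fun a ha b hb hab => quotDisjoint_iff.2 (hdisj ha hb hab), ?_, ?_,
    quotArea_le_of_image_subset_biUnion_tri5 hS (fun w hw => (hre w hw).2) himage⟩
  · simpa only [iUnion_translates_eq_preimage_image, preimage_iUnion₂] using
      image_subset_iff.1 himage
  · rw [← quotArea_biUnion_tri hS hre hdisj]
    exact quotArea_mono (biUnion_subset_biUnion_left hSA)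

/-- For any open `O ⊆ ℂ` with `O + 2πi = O` containing the half-plane
`Re z < -π`, there is a countable family of points `w ∉ O` with `Re w < 0`
whose triangles are pairwise disjoint in the quotient, such that
`⋃_{w ∉ O, Re w < 0} T(w) ⊆ ⋃_i ⋃_k (T₅(wᵢ) + 2πik)`; consequently
`Σᵢ area T(wᵢ) ≤ quotient-area of the union ≤ 25 Σᵢ area T(wᵢ)`
(the Euclidean area of `T(w)` being `(Re w)²`). -/
theorem stmt4 (O : Set ℂ) (hO : IsOpen O)
    (hper : (fun z : ℂ => z + 2 * Real.pi * Complex.I) '' O = O)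
    (hhalf : {z : ℂ | z.re < -Real.pi} ⊆ O) :
    ∃ S : Set ℂ, S.Countable ∧ (∀ w ∈ S, w.re < 0 ∧ w ∉ O) ∧
      (S.Pairwise fun w₁ w₂ => QuotDisjoint (Tri w₁) (Tri w₂)) ∧
      ((⋃ w ∈ {w : ℂ | w ∉ O ∧ w.re < 0}, Tri w) ⊆
        ⋃ w ∈ S, ⋃ k : ℤ, (fun z : ℂ => z + 2 * Real.pi * Complex.I * k) '' Tri5 w) ∧
      (∑' w : S, ENNReal.ofReal ((w : ℂ).re ^ 2)
          ≤ quotArea (⋃ w ∈ {w : ℂ | w ∉ O ∧ w.re < 0}, Tri w)) ∧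
      quotArea (⋃ w ∈ {w : ℂ | w ∉ O ∧ w.re < 0}, Tri w)
          ≤ 25 * ∑' w : S, ENNReal.ofReal ((w : ℂ).re ^ 2) := by
  obtain ⟨S, hSA, hS, hrest⟩ := stmt4_general (A := {w : ℂ | w ∉ O ∧ w.re < 0})
    fun w hw => ⟨not_lt.1 fun h => hw.1 (hhalf h), hw.2⟩
  exact ⟨S, hS, fun w hw => (hSA hw).symm, hrest⟩
end
end

section
/- Let W ⊊ ℂ be a connected, simply connected open set with 0 ∈ W. Let A and B be closed subsets of ℂ with 0 ∉ A and 0 ∉ B. Let U be the connected component of W \ A containing 0 and U′ the connected component of W \ B containing 0, and assume U and U′ are simply connected. Then the connected component of W \ (A ∪ B) containing 0 is simply connected. -/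
open Complex Metric Set

/-!
Let `V` be the component of `0` in `W \ (A ∪ B)`. A frontier point `p` of `V` lies outside one of
the two given simply connected components, both of which contain `V`, so `log (z - p)` has a
continuous branch on `V`. It remains to contract loops in an open set `V` with this property. Every
loop is homotopic to a closed polygon on a fine grid. At a lexicographically maximal vertex of the
polygon that is visited once, without backtracking, the cell below and to the left lies in `V`: it
would otherwise contain a frontier point of `V`, around which the polygon winds once. So the polygon
can be pushed across that cell, and the process ends with a constant loop.
-/

section LogBranch

variable {U V : Set ℂ} {p u b c : ℂ}

/-- `log (z - p)` has a continuous branch on `V`; in other words, loops in `V` do not wind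
around `p`. -/
def HasLogBranch (V : Set ℂ) (p : ℂ) : Prop :=
  ∃ f : ℂ → ℂ, ContinuousOn f V ∧ ∀ z ∈ V, exp (f z) = z - p

lemma HasLogBranch.mono (h : HasLogBranch U p) (hVU : V ⊆ U) : HasLogBranch V p :=
  let ⟨f, hf, hexp⟩ := h
  ⟨f, hf.mono hVU, fun z hz ↦ hexp z (hVU hz)⟩

lemma HasLogBranch.notMem (h : HasLogBranch V p) : p ∉ V := fun hp ↦
  let ⟨f, _, hexp⟩ := h
  exp_ne_zero (f p) (by rw [hexp p hp, sub_self])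

lemma hasLogBranch_of_isSimplyConnected (hUo : IsOpen U) (hU : IsSimplyConnected U) (hp : p ∉ U) :
    HasLogBranch U p := by
  have h0 : (0 : ℂ) ∉ (fun z ↦ z - p) '' U := by
    rintro ⟨z, hz, hzp⟩
    exact hp (sub_eq_zero.1 hzp ▸ hz)
  exact exists_continuousOn_eqOn_exp_comp hU hUo (by fun_prop) h0

lemma sub_log_eq_of_joinedIn {f : ℂ → ℂ} (hf : ContinuousOn f V)
    (hexp : ∀ z ∈ V, exp (f z) = z - p) (h : JoinedIn {z ∈ V | (z - p) * u ∈ slitPlane} b c) :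
    f b - log ((b - p) * u) = f c - log ((c - p) * u) := by
  obtain ⟨γ, hγ⟩ := h
  have hcont : Continuous fun t ↦ f (γ t) - log ((γ t - p) * u) :=
    (hf.comp_continuous γ.continuous fun t ↦ (hγ t).1).sub
      (Continuous.clog (by fun_prop) fun t ↦ (hγ t).2)
  have hval (t) : exp (f (γ t) - log ((γ t - p) * u)) = u⁻¹ := by
    have h0 := slitPlane_ne_zero (hγ t).2
    rw [exp_sub, hexp _ (hγ t).1, exp_log h0, div_mul_cancel_left₀ (left_ne_zero_of_mul h0)]
  simpa using isCoveringMap_exp.const_of_comp hcont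
    (fun s t ↦ Subtype.ext ((hval s).trans (hval t).symm)) 0 1

lemma log_neg_of_im_pos {w : ℂ} (h : 0 < w.im) : log (-w) = log w - Real.pi * I := by
  apply Complex.ext <;> simp [log_re, log_im, arg_neg_eq_arg_sub_pi_of_im_pos h]

lemma log_neg_of_im_neg {w : ℂ} (h : w.im < 0) : log (-w) = log w + Real.pi * I := by
  apply Complex.ext <;> simp [log_re, log_im, arg_neg_eq_arg_add_pi_of_im_neg h]

-- The two paths from `b` to `c`, each avoiding one of two opposite rays from `p`, form a loop
-- winding once around `p`.
lemma not_hasLogBranch_of_joinedIn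
    (h₁ : JoinedIn {z ∈ V | (z - p) * u ∈ slitPlane} b c)
    (h₂ : JoinedIn {z ∈ V | (z - p) * -u ∈ slitPlane} b c)
    (hb : 0 < ((b - p) * u).im) (hc : ((c - p) * u).im < 0) : ¬ HasLogBranch V p := by
  rintro ⟨f, hf, hexp⟩
  have e₁ := sub_log_eq_of_joinedIn hf hexp h₁
  have e₂ := sub_log_eq_of_joinedIn hf hexp h₂
  rw [mul_neg, mul_neg, log_neg_of_im_pos hb, log_neg_of_im_neg hc] at e₂
  have : (2 * Real.pi : ℂ) * I = 0 := by linear_combination e₂ - e₁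
  simp [Real.pi_ne_zero] at this

end LogBranch

lemma exists_mem_frontier_of_isPreconnected {X : Type*} [TopologicalSpace X] {s t : Set X}
    (hs : IsPreconnected s) (ht : IsOpen t) (hst : (s ∩ t).Nonempty) (hsub : ¬ s ⊆ t) :
    ∃ x ∈ s, x ∈ frontier t := by
  by_contra! h
  refine hsub (hs.subset_of_closure_inter_subset ht hst fun x ⟨hxt, hxs⟩ ↦ ?_)
  by_contra hx
  exact h x hxs (ht.frontier_eq ▸ ⟨hxt, hx⟩)

section ChainProducts

variable {α G : Type*} [Group G] {R : α → α → Prop} {g : α → α → G} {a b c : α}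
  {l l₁ l₂ t : List α} {y z : G}

/-- The product `g a₀ a₁ * g a₁ a₂ * ⋯ * g aₙ₋₁ aₙ` along the list `[a₀, …, aₙ]`: if `g a b` is the
holonomy of the edge from `a` to `b`, this is the holonomy of a polygonal path. -/
def pathProd (g : α → α → G) : List α → G
  | [] => 1
  | [_] => 1
  | a :: b :: l => g a b * pathProd g (b :: l)

/-- The product `g a₀ a₁ * ⋯ * g aₙ₋₁ aₙ * g aₙ a₀` along the list `[a₀, …, aₙ]` read as a closed
polygon. -/
def loopProd (g : α → α → G) : List α → G
  | [] => 1
  | a :: l => pathProd g (a :: (l ++ [a]))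

lemma pathProd_append_cons :
    ∀ l₁, pathProd g (l₁ ++ c :: l₂) = pathProd g (l₁ ++ [c]) * pathProd g (c :: l₂)
  | [] => by simp [pathProd]
  | [a] => by simp [pathProd]
  | a :: b :: l => by
    simpa [pathProd, mul_assoc] using pathProd_append_cons (b :: l)

lemma loopProd_cons_append_cons : loopProd g (a :: (l₁ ++ b :: l₂)) =
    pathProd g (a :: (l₁ ++ [b])) * pathProd g (b :: (l₂ ++ [a])) := by
  simpa [loopProd] using pathProd_append_cons (g := g) (c := b) (l₂ := l₂ ++ [a]) (a :: l₁)

lemma loopProd_append_comm_eq_one (h : loopProd g (l₁ ++ l₂) = 1) :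
    loopProd g (l₂ ++ l₁) = 1 := by
  match l₁, l₂ with
  | [], l₂ => simpa using h
  | a :: l₁, [] => simpa using h
  | a :: l₁, b :: l₂ =>
    rw [List.cons_append, loopProd_cons_append_cons] at h ⊢
    exact mul_eq_one_comm.1 h

lemma loopProd_cons (ht : t ≠ []) :
    loopProd g (a :: t) = g a (t.head ht) * pathProd g t * g (t.getLast ht) a := by
  obtain ⟨l, c, rfl⟩ := (List.eq_nil_or_concat' t).resolve_left ht
  have h : loopProd g (a :: (l ++ [c])) = pathProd g (a :: (l ++ [c])) * g c a := by
    simpa [pathProd] using loopProd_cons_append_cons (g := g) (a := a) (b := c) (l₁ := l) (l₂ := [])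
  rw [h]
  cases l <;> simp [pathProd]

lemma loopProd_dropLast (ht : t ≠ []) (h : t.head ht = t.getLast ht) :
    loopProd g t.dropLast = pathProd g t := by
  obtain ⟨l, c, rfl⟩ := (List.eq_nil_or_concat' t).resolve_left ht
  cases l with
  | nil => simp [loopProd, pathProd]
  | cons b l =>
    obtain rfl : b = c := by simpa using h
    rw [List.dropLast_concat]
    rfl

lemma chain_cons_append_cons : Cycle.Chain R ↑(a :: (l₁ ++ a :: l₂)) ↔
    Cycle.Chain R ↑(a :: l₁) ∧ Cycle.Chain R ↑(a :: l₂) := by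
  simp only [Cycle.chain_coe_cons]
  simpa using List.isChain_split (R := R) (c := a) (l₁ := a :: l₁) (l₂ := l₂ ++ [a])

lemma chain_cons (ht : t ≠ []) : Cycle.Chain R ↑(a :: t) ↔
    R a (t.head ht) ∧ t.IsChain R ∧ R (t.getLast ht) a := by
  obtain ⟨l, c, rfl⟩ := (List.eq_nil_or_concat' t).resolve_left ht
  rw [Cycle.chain_coe_cons]
  cases l <;> simp

lemma chain_dropLast (ht : t ≠ []) (h : t.head ht = t.getLast ht) (hR : t.IsChain R) :
    Cycle.Chain R ↑t.dropLast := by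
  obtain ⟨l, c, rfl⟩ := (List.eq_nil_or_concat' t).resolve_left ht
  cases l with
  | nil => simp
  | cons b l =>
    obtain rfl : b = c := by simpa using h
    rw [List.dropLast_concat]
    exact (Cycle.chain_coe_cons R b l).2 hR

/-- `y` is the product of `g` along some `R`-chain from `a` to `b`. -/
def IsChainProd (R : α → α → Prop) (g : α → α → G) (a b : α) (y : G) : Prop :=
  ∃ l : List α, List.IsChain R (a :: (l ++ [b])) ∧ pathProd g (a :: (l ++ [b])) = y

lemma isChainProd_of_rel (h : R a b) : IsChainProd R g a b (g a b) :=
  ⟨[], by simpa using h, by simp [pathProd]⟩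

lemma IsChainProd.mul (hy : IsChainProd R g a b y) (hz : IsChainProd R g b c z) :
    IsChainProd R g a c (y * z) := by
  obtain ⟨l₁, h₁, rfl⟩ := hy
  obtain ⟨l₂, h₂, rfl⟩ := hz
  refine ⟨l₁ ++ b :: l₂, ?_, ?_⟩
  · simpa using List.isChain_split (l₁ := a :: l₁).2 ⟨h₁, h₂⟩
  · simpa using pathProd_append_cons (g := g) (c := b) (l₂ := l₂ ++ [c]) (a :: l₁)

end ChainProducts

section Rectangle

variable {V : Set ℂ} {z p q r : ℂ}

lemma convex_reProdIm {s t : Set ℝ} (hs : Convex ℝ s) (ht : Convex ℝ t) : Convex ℝ (s ×ℂ t) :=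
  (hs.linear_preimage reLm).inter (ht.linear_preimage imLm)

lemma mul_mem_slitPlane_of_le (hne : z ≠ p) (h : z.re ≤ p.re ∨ z.im ≤ p.im) :
    (z - p) * (-1 + I) ∈ slitPlane := by
  rw [mem_slitPlane_iff]
  by_contra! hcon
  simp only [mul_re, mul_im, sub_re, sub_im, add_re, add_im, neg_re, neg_im, one_re, one_im, I_re,
    I_im] at hcon
  exact hne (Complex.ext (by grind) (by grind))

lemma mul_mem_slitPlane_of_ge (hne : z ≠ p) (h : p.re ≤ z.re ∨ p.im ≤ z.im) :
    (z - p) * -(-1 + I) ∈ slitPlane := by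
  convert mul_mem_slitPlane_of_le (neg_injective.ne hne) (h.imp neg_le_neg neg_le_neg) using 1
  ring

lemma im_mul_pos (hne : z ≠ p) (hre : p.re ≤ z.re) (him : z.im ≤ p.im) :
    0 < ((z - p) * (-1 + I)).im := by
  by_contra! hcon
  simp only [mul_im, sub_re, sub_im, add_re, add_im, neg_re, neg_im, one_re, one_im, I_re,
    I_im] at hcon
  exact hne (Complex.ext (by linarith) (by linarith))

lemma im_mul_neg (hne : z ≠ p) (hre : z.re ≤ p.re) (him : p.im ≤ z.im) :
    ((z - p) * (-1 + I)).im < 0 := by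
  have := im_mul_pos (neg_injective.ne hne) (neg_le_neg hre) (neg_le_neg him)
  rw [show -z - -p = -(z - p) by ring, neg_mul, neg_im] at this
  exact neg_pos.1 this

lemma joinedIn_slitPlane_of_segment (hp : p ∉ V) {w : ℂ} (h : segment ℝ z w ⊆ V)
    (hle : p.re ≤ z.re ∧ p.re ≤ w.re ∨ p.im ≤ z.im ∧ p.im ≤ w.im) :
    JoinedIn {z ∈ V | (z - p) * -(-1 + I) ∈ slitPlane} z w := by
  refine .of_segment_subset fun x hx ↦ ⟨h hx, ?_⟩
  refine mul_mem_slitPlane_of_ge (fun hxp ↦ hp (hxp ▸ h hx)) (hle.imp ?_ ?_)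
  · exact fun hzw ↦ (convex_halfSpace_re_ge p.re).segment_subset hzw.1 hzw.2 hx
  · exact fun hzw ↦ (convex_halfSpace_im_ge p.im).segment_subset hzw.1 hzw.2 hx

-- A point of the rectangle outside `V` would be encircled by the given path between the corners,
-- closed up through `r`.
lemma reProdIm_subset_of_corner (hV : IsOpen V) (hlog : ∀ p ∈ frontier V, HasLogBranch V p)
    (hre : q.re ≤ r.re) (him : q.im ≤ r.im)
    (hb : segment ℝ r ⟨r.re, q.im⟩ ⊆ V) (hc : segment ℝ r ⟨q.re, r.im⟩ ⊆ V)
    (hbc : JoinedIn {z ∈ V | z.re ≤ q.re ∨ z.im ≤ q.im} ⟨r.re, q.im⟩ ⟨q.re, r.im⟩) :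
    Icc q.re r.re ×ℂ Icc q.im r.im ⊆ V := by
  by_contra hsub
  obtain ⟨p, ⟨⟨hq₁, hr₁⟩, hq₂, hr₂⟩, hpV⟩ := exists_mem_frontier_of_isPreconnected
    (convex_reProdIm (convex_Icc _ _) (convex_Icc _ _)).isPreconnected hV
    ⟨r, ⟨⟨hre, le_rfl⟩, him, le_rfl⟩, hb (left_mem_segment ℝ _ _)⟩ hsub
  have hlogp := hlog p hpV
  have hp := hlogp.notMem
  have hne {z} (hz : z ∈ V) : z ≠ p := fun h ↦ hp (h ▸ hz)
  have h₁ : JoinedIn {z ∈ V | (z - p) * (-1 + I) ∈ slitPlane} ⟨r.re, q.im⟩ ⟨q.re, r.im⟩ :=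
    hbc.mono fun z hz ↦ ⟨hz.1, mul_mem_slitPlane_of_le (hne hz.1) (hz.2.imp hq₁.trans' hq₂.trans')⟩
  have h₂ : JoinedIn {z ∈ V | (z - p) * -(-1 + I) ∈ slitPlane} ⟨r.re, q.im⟩ ⟨q.re, r.im⟩ :=
    (joinedIn_slitPlane_of_segment hp hb (.inl ⟨hr₁, hr₁⟩)).symm.trans
      (joinedIn_slitPlane_of_segment hp hc (.inr ⟨hr₂, hr₂⟩))
  exact not_hasLogBranch_of_joinedIn h₁ h₂
    (im_mul_pos (hne (hb (right_mem_segment ℝ _ _))) hr₁ hq₂)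
    (im_mul_neg (hne (hc (right_mem_segment ℝ _ _))) hq₁ hr₂) hlogp

end Rectangle

section ConvexCocycle

variable {E G : Type*} [AddCommGroup E] [Module ℝ E] [Group G] {V : Set E} {g : E → E → G} {x y : E}

/-- `g` is a multiplicative cocycle on every convex subset of `V`. The holonomy along segments is
one; its product along a closed polygon is the class of that polygon in the fundamental group. -/
def IsConvexCocycle (V : Set E) (g : E → E → G) : Prop :=
  ∀ ⦃K : Set E⦄, Convex ℝ K → K ⊆ V → ∀ ⦃x⦄, x ∈ K → ∀ ⦃y⦄, y ∈ K → ∀ ⦃z⦄, z ∈ K →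
    g x y * g y z = g x z

lemma IsConvexCocycle.self (hg : IsConvexCocycle V g) (hx : x ∈ V) : g x x = 1 :=
  mul_eq_left.1 <| hg (convex_singleton x) (singleton_subset_iff.2 hx) (mem_singleton x)
    (mem_singleton x) (mem_singleton x)

lemma IsConvexCocycle.mul_symm (hg : IsConvexCocycle V g) (h : segment ℝ x y ⊆ V) :
    g x y * g y x = 1 := by
  have hx := left_mem_segment ℝ x y
  rw [hg (convex_segment x y) h hx (right_mem_segment ℝ x y) hx, hg.self (h hx)]

end ConvexCocycle

lemma joinedIn_of_isChain {α X : Type*} [TopologicalSpace X] {F : Set X} {φ : α → X} {l : List α}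
    {a b : α} (hl : l.IsChain fun a b ↦ JoinedIn F (φ a) (φ b)) (ha : a ∈ l) (hb : b ∈ l)
    (hab : a ≠ b) : JoinedIn F (φ a) (φ b) := by
  have : IsTrans α fun a b ↦ JoinedIn F (φ a) (φ b) := ⟨fun _ _ _ ↦ JoinedIn.trans⟩
  have : Std.Symm fun a b ↦ JoinedIn F (φ a) (φ b) := ⟨fun _ _ ↦ JoinedIn.symm⟩
  exact (List.isChain_iff_pairwise.1 hl).forall ha hb hab

section Grid

variable {V : Set ℂ} {o : ℂ} {δ : ℝ} {a b c : ℕ × ℕ} {i j : ℕ} {t : List (ℕ × ℕ)}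

/-- The vertex with indices `v` of the square grid of mesh `δ` in the quadrant with corner `o`. -/
def gridPoint (o : ℂ) (δ : ℝ) (v : ℕ × ℕ) : ℂ := ⟨o.re + δ * v.1, o.im + δ * v.2⟩

/-- `a` and `b` are equal or neighbouring grid vertices, joined by a segment in `V`. -/
def GridAdj (V : Set ℂ) (o : ℂ) (δ : ℝ) (a b : ℕ × ℕ) : Prop :=
  (a.1 - b.1 : ℤ).natAbs + (a.2 - b.2 : ℤ).natAbs ≤ 1 ∧
    segment ℝ (gridPoint o δ a) (gridPoint o δ b) ⊆ V

lemma GridAdj.symm (h : GridAdj V o δ a b) : GridAdj V o δ b a :=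
  ⟨by have := h.1; lia, segment_symm ℝ (gridPoint o δ b) _ ▸ h.2⟩

/-- The decreasing quantity of the descent: every vertex counts `1` plus its distance to the corner
of the quadrant. -/
def gridWeight (l : List (ℕ × ℕ)) : ℕ := (l.map fun v ↦ v.1 + v.2 + 1).sum

lemma exists_corner (hab : GridAdj V o δ a b) (hca : GridAdj V o δ c a) (hb : b ∈ t) (hc : c ∈ t)
    (hbc : b ≠ c) (ha : a ∉ t) (hmax : ∀ w ∈ t, toLex w ≤ toLex a) :
    ∃ i j, a = (i + 1, j + 1) ∧ (∀ w ∈ t, w.1 ≤ i ∨ w.2 ≤ j) ∧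
      (b = (i + 1, j) ∧ c = (i, j + 1) ∨ b = (i, j + 1) ∧ c = (i + 1, j)) := by
  obtain ⟨x, y⟩ := a
  have hlt (w) (hw : w ∈ t) : w.1 < x ∨ w.1 = x ∧ w.2 < y := by
    have h₁ := Prod.Lex.toLex_le_toLex.1 (hmax w hw)
    have h₂ : w ≠ (x, y) := fun h ↦ ha (h ▸ hw)
    grind
  have hb' := hlt b hb
  have hc' := hlt c hc
  have hab' := hab.1
  have hca' := hca.1
  refine ⟨x - 1, y - 1, ?_, fun w hw ↦ ?_, ?_⟩
  · grind
  · have := hlt w hw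
    lia
  · grind

lemma joinedIn_of_isChain_gridAdj (hδ : 0 ≤ δ) (ht : t.IsChain (GridAdj V o δ))
    (hij : ∀ w ∈ t, w.1 ≤ i ∨ w.2 ≤ j) (ha : a ∈ t) (hb : b ∈ t) (hab : a ≠ b) :
    JoinedIn {z ∈ V | z.re ≤ (gridPoint o δ (i, j)).re ∨ z.im ≤ (gridPoint o δ (i, j)).im}
      (gridPoint o δ a) (gridPoint o δ b) := by
  refine joinedIn_of_isChain (ht.imp_of_mem_imp fun v w hv hw hvw ↦ ?_) ha hb hab
  refine .of_segment_subset fun z hz ↦ ⟨hvw.2 hz, ?_⟩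
  have hcase : v.1 ≤ i ∧ w.1 ≤ i ∨ v.2 ≤ j ∧ w.2 ≤ j := by
    have := hij v hv
    have := hij w hw
    have := hvw.1
    lia
  have hmono {m n : ℕ} (h : m ≤ n) (s : ℝ) : s + δ * m ≤ s + δ * n := by gcongr
  refine hcase.imp (fun h ↦ ?_) fun h ↦ ?_
  · exact (convex_halfSpace_re_le _).segment_subset (hmono h.1 _) (hmono h.2 _) hz
  · exact (convex_halfSpace_im_le _).segment_subset (hmono h.1 _) (hmono h.2 _) hz

/-- The closed square cell of the grid with lower left vertex `v`. -/
def gridCell (o : ℂ) (δ : ℝ) (v : ℕ × ℕ) : Set ℂ :=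
  Icc (gridPoint o δ v).re (gridPoint o δ (v + 1)).re ×ℂ
    Icc (gridPoint o δ v).im (gridPoint o δ (v + 1)).im

lemma convex_gridCell : Convex ℝ (gridCell o δ a) :=
  convex_reProdIm (convex_Icc _ _) (convex_Icc _ _)

lemma gridPoint_mem_gridCell (hδ : 0 ≤ δ) (h : b ∈ Icc a (a + 1)) :
    gridPoint o δ b ∈ gridCell o δ a := by
  obtain ⟨⟨h₁, h₂⟩, h₃, h₄⟩ := h
  have hmono {m n : ℕ} (h : m ≤ n) (s : ℝ) : s + δ * m ≤ s + δ * n := by gcongr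
  exact ⟨⟨hmono h₁ _, hmono h₃ _⟩, hmono h₂ _, hmono h₄ _⟩

lemma gridCell_subset (hV : IsOpen V) (hlog : ∀ p ∈ frontier V, HasLogBranch V p) (hδ : 0 ≤ δ)
    (ht : t.IsChain (GridAdj V o δ)) (hij : ∀ w ∈ t, w.1 ≤ i ∨ w.2 ≤ j)
    (hb : (i + 1, j) ∈ t) (hab : GridAdj V o δ (i + 1, j + 1) (i + 1, j))
    (hc : (i, j + 1) ∈ t) (hac : GridAdj V o δ (i + 1, j + 1) (i, j + 1)) :
    gridCell o δ (i, j) ⊆ V := by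
  obtain ⟨⟨hre, -⟩, him, -⟩ :=
    gridPoint_mem_gridCell (o := o) hδ (right_mem_Icc.2 (le_add_of_nonneg_right zero_le) :
      (i, j) + 1 ∈ Icc (i, j) ((i, j) + 1))
  exact reProdIm_subset_of_corner hV hlog hre him hab.2 hac.2
    (joinedIn_of_isChain_gridAdj hδ ht hij hb hc (by simp))

lemma exists_gridCell_of_corner (hV : IsOpen V) (hlog : ∀ p ∈ frontier V, HasLogBranch V p)
    (hδ : 0 ≤ δ) (ht : t.IsChain (GridAdj V o δ)) (hab : GridAdj V o δ a b)
    (hca : GridAdj V o δ c a) (hb : b ∈ t) (hc : c ∈ t) (hbc : b ≠ c) (ha : a ∉ t)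
    (hmax : ∀ w ∈ t, toLex w ≤ toLex a) :
    ∃ d, a = d + 1 ∧ gridCell o δ d ⊆ V ∧ GridAdj V o δ d b ∧ GridAdj V o δ c d ∧
      b ∈ Icc d a ∧ c ∈ Icc d a := by
  obtain ⟨i, j, rfl, hij, hcase⟩ := exists_corner hab hca hb hc hbc ha hmax
  have hcell : gridCell o δ (i, j) ⊆ V := by
    rcases hcase with ⟨rfl, rfl⟩ | ⟨rfl, rfl⟩
    · exact gridCell_subset hV hlog hδ ht hij hb hab hc hca.symm
    · exact gridCell_subset hV hlog hδ ht hij hc hca.symm hb hab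
  have hadj {w : ℕ × ℕ} (hw : w = (i + 1, j) ∨ w = (i, j + 1)) :
      w ∈ Icc (i, j) (i + 1, j + 1) ∧ GridAdj V o δ (i, j) w := by
    have hmem : w ∈ Icc (i, j) (i + 1, j + 1) := by
      rcases hw with rfl | rfl <;> simp
    refine ⟨hmem, by rcases hw with rfl | rfl <;> simp, ?_⟩
    have hi := gridPoint_mem_gridCell (o := o) hδ (left_mem_Icc.2 (hmem.1.trans hmem.2))
    exact (convex_gridCell.segment_subset hi (gridPoint_mem_gridCell hδ hmem)).trans hcell
  have hb' := hadj (w := b) (by tauto)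
  have hc' := hadj (w := c) (by tauto)
  exact ⟨(i, j), rfl, hcell, hb'.2, hc'.2.symm, hb'.1, hc'.1⟩

section Descent

open scoped Function

variable {G : Type*} [Group G] {g : ℂ → ℂ → G}

lemma loopProd_cons_eq_one_of_corner (hV : IsOpen V)
    (hlog : ∀ p ∈ frontier V, HasLogBranch V p) (hδ : 0 ≤ δ) (hg : IsConvexCocycle V g)
    (hchain : Cycle.Chain (GridAdj V o δ) ↑(a :: t)) (hmax : ∀ w ∈ t, toLex w ≤ toLex a)
    (ht : t ≠ []) (ha : a ∉ t) (hne : t.head ht ≠ t.getLast ht)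
    (ih : ∀ l : List (ℕ × ℕ), gridWeight l < gridWeight (a :: t) →
      Cycle.Chain (GridAdj V o δ) ↑l → loopProd (g on gridPoint o δ) l = 1) :
    loopProd (g on gridPoint o δ) (a :: t) = 1 := by
  obtain ⟨hab, htc, hca⟩ := (chain_cons ht).1 hchain
  obtain ⟨d, rfl, hcell, hdb, hcd, hb, hc⟩ := exists_gridCell_of_corner hV hlog hδ htc hab hca
    (List.head_mem ht) (List.getLast_mem ht) hne ha hmax
  have hlt : gridWeight (d :: t) < gridWeight ((d + 1) :: t) := by
    simp only [gridWeight, List.map_cons, List.sum_cons, Prod.fst_add, Prod.snd_add, Prod.fst_one,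
      Prod.snd_one]
    lia
  have hd : loopProd (g on gridPoint o δ) (d :: t) = 1 :=
    ih _ hlt ((chain_cons ht).2 ⟨hdb, htc, hcd⟩)
  have hmem {w} (hw : w ∈ Icc d (d + 1)) := gridPoint_mem_gridCell (o := o) hδ hw
  have hdm := hmem (left_mem_Icc.2 (hb.1.trans hb.2))
  have ham := hmem (right_mem_Icc.2 (hb.1.trans hb.2))
  have hg' := hg convex_gridCell hcell
  rw [loopProd_cons ht, Function.onFun, Function.onFun] at hd ⊢
  rw [← hg' ham hdm (hmem hb), ← hg' (hmem hc) hdm ham, mul_assoc (g _ _), mul_assoc (g _ _),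
    ← mul_assoc (g _ _ * _), hd, one_mul, hg' ham hdm ham, hg.self (hcell ham)]

lemma loopProd_cons_eq_one (hV : IsOpen V) (hlog : ∀ p ∈ frontier V, HasLogBranch V p)
    (hδ : 0 ≤ δ) (hg : IsConvexCocycle V g) (hchain : Cycle.Chain (GridAdj V o δ) ↑(a :: t))
    (hmax : ∀ w ∈ t, toLex w ≤ toLex a)
    (ih : ∀ l : List (ℕ × ℕ), gridWeight l < gridWeight (a :: t) →
      Cycle.Chain (GridAdj V o δ) ↑l → loopProd (g on gridPoint o δ) l = 1) :
    loopProd (g on gridPoint o δ) (a :: t) = 1 := by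
  by_cases ha : a ∈ t
  · obtain ⟨l₁, l₂, rfl⟩ := List.append_of_mem ha
    obtain ⟨h₁, h₂⟩ := chain_cons_append_cons.1 hchain
    have e₁ : loopProd (g on gridPoint o δ) (a :: l₁) = 1 := ih _ (by simp [gridWeight]) h₁
    have e₂ : loopProd (g on gridPoint o δ) (a :: l₂) = 1 :=
      ih _ (by simp only [gridWeight, List.map_cons, List.map_append, List.sum_cons,
        List.sum_append]; lia) h₂
    rw [loopProd_cons_append_cons]
    exact (congrArg₂ (· * ·) e₁ e₂).trans (one_mul 1)
  rcases eq_or_ne t [] with rfl | ht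
  · have haa : GridAdj V o δ a a := by simpa using hchain
    simpa [loopProd, pathProd] using hg.self (haa.2 (left_mem_segment ℝ _ _))
  rcases eq_or_ne (t.head ht) (t.getLast ht) with hbc | hbc
  · obtain ⟨hab, htc, -⟩ := (chain_cons ht).1 hchain
    have hlt : gridWeight t.dropLast < gridWeight (a :: t) := by
      have hle : gridWeight t.dropLast ≤ gridWeight t :=
        ((List.dropLast_sublist t).map _).sum_le_sum (by simp)
      simp only [gridWeight, List.map_cons, List.sum_cons] at hle ⊢
      lia
    rw [loopProd_cons ht, ← loopProd_dropLast ht hbc, ih _ hlt (chain_dropLast ht hbc htc), mul_one,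
      ← hbc]
    exact hg.mul_symm hab.2
  · exact loopProd_cons_eq_one_of_corner hV hlog hδ hg hchain hmax ht ha hbc ih

theorem loopProd_eq_one (hV : IsOpen V) (hlog : ∀ p ∈ frontier V, HasLogBranch V p)
    (hδ : 0 ≤ δ) (hg : IsConvexCocycle V g) (l : List (ℕ × ℕ))
    (hl : Cycle.Chain (GridAdj V o δ) ↑l) : loopProd (g on gridPoint o δ) l = 1 := by
  induction hn : gridWeight l using Nat.strong_induction_on generalizing l with | _ n ih
  rcases eq_or_ne l [] with rfl | hne
  · rfl
  obtain ⟨v, hv, hmax⟩ := l.toFinset.exists_max_image toLex (List.toFinset_nonempty_iff l |>.2 hne)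
  obtain ⟨s, t, rfl⟩ := List.append_of_mem (List.mem_toFinset.1 hv)
  refine loopProd_append_comm_eq_one (l₁ := v :: t)
    (loopProd_cons_eq_one (t := t ++ s) hV hlog hδ hg ?_ ?_ ?_)
  · rwa [← List.cons_append, Cycle.coe_eq_coe.2 List.isRotated_append]
  · intro w hw
    exact hmax w (List.mem_toFinset.2 (by grind))
  · intro l' hl'
    refine fun h ↦ ih _ (hl'.trans_eq ?_) l' h rfl
    simp only [← hn, gridWeight, List.map_cons, List.map_append, List.sum_cons, List.sum_append]
    lia

end Descent

end Grid

section Holonomy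

open Path.Homotopic.Quotient

variable {X : Type*} [TopologicalSpace X] {x₀ a b d : X} {c : ∀ v, Path x₀ v}

/-- The class of the loop formed by a path `p` from `a` to `b` and the chosen paths `c` from the
base point to `a` and `b`. It is inverted because the product in `FundamentalGroup` is composition
of paths in reverse order. -/
noncomputable def holonomy (c : ∀ v, Path x₀ v) (p : Path.Homotopic.Quotient a b) :
    FundamentalGroup X x₀ :=
  (FundamentalGroup.fromPath ((mk (c a)).trans (p.trans (mk (c b)).symm)))⁻¹

lemma holonomy_mul (p : Path.Homotopic.Quotient a b) (q : Path.Homotopic.Quotient b d) :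
    holonomy c p * holonomy c q = holonomy c (p.trans q) := by
  have h : ((mk (c a)).trans (p.trans (mk (c b)).symm)).trans
      ((mk (c b)).trans (q.trans (mk (c d)).symm)) =
      (mk (c a)).trans ((p.trans q).trans (mk (c d)).symm) := by
    simp only [trans_assoc]
    rw [← trans_assoc (mk (c b)).symm, symm_trans, refl_trans]
  exact (mul_inv_rev _ _).symm.trans (congrArg (·⁻¹) h)

lemma eq_refl_of_holonomy_eq_one {p : Path.Homotopic.Quotient a a} (h : holonomy c p = 1) :
    p = .refl a := by
  have h' : (mk (c a)).trans (p.trans (mk (c a)).symm) = .refl x₀ := inv_eq_one.1 h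
  rw [← trans_assoc] at h'
  calc p = ((mk (c a)).symm.trans (((mk (c a)).trans p).trans (mk (c a)).symm)).trans
        (mk (c a)) := by
        rw [trans_assoc, trans_assoc, symm_trans, trans_refl, ← trans_assoc, symm_trans, refl_trans]
    _ = .refl a := by rw [h', trans_refl, symm_trans]

end Holonomy

section SegmentHolonomy

variable {E : Type*} [AddCommGroup E] [Module ℝ E] [TopologicalSpace E] [IsTopologicalAddGroup E]
  [ContinuousSMul ℝ E] {V K : Set E} {a b x₀ : V} {c : ∀ v, Path x₀ v}

lemma homotopic_of_convex (hK : Convex ℝ K) (hKV : K ⊆ V) {p q : Path a b}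
    (hp : ∀ t, (p t : E) ∈ K) (hq : ∀ t, (q t : E) ∈ K) : p.Homotopic q := by
  have ha : (a : E) ∈ K := by simpa using hp 0
  have hb : (b : E) ∈ K := by simpa using hp 1
  have : ContractibleSpace K := hK.contractibleSpace ⟨a, ha⟩
  let lift (r : Path a b) (hr : ∀ t, (r t : E) ∈ K) : Path (⟨a, ha⟩ : K) ⟨b, hb⟩ :=
    { toFun t := ⟨r t, hr t⟩, source' := by simp, target' := by simp }
  exact (SimplyConnectedSpace.paths_homotopic (lift p hp) (lift q hq)).map
    ⟨inclusion hKV, continuous_inclusion hKV⟩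

/-- `Path.segment` as a path in a set containing the segment. -/
def segmentPath {x y : E} (h : segment ℝ x y ⊆ V) :
    Path (⟨x, h (left_mem_segment ℝ x y)⟩ : V) ⟨y, h (right_mem_segment ℝ x y)⟩ where
  toFun t := ⟨Path.segment x y t, h (Path.range_segment x y ▸ mem_range_self t)⟩
  source' := by simp
  target' := by simp

lemma segmentPath_mem {x y : E} (h : segment ℝ x y ⊆ V) (t : unitInterval) :
    (segmentPath h t : E) ∈ segment ℝ x y :=
  Path.range_segment x y ▸ mem_range_self (f := Path.segment x y) t

open scoped Classical in
/-- The holonomy along the segment from `x` to `y`, with the junk value `1` if the segment is not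
contained in `V`. -/
noncomputable def segmentHolonomy (c : ∀ v, Path x₀ v) (x y : E) : FundamentalGroup V x₀ :=
  if h : segment ℝ x y ⊆ V then holonomy c (.mk (segmentPath h)) else 1

lemma holonomy_eq_segmentHolonomy (hK : Convex ℝ K) (hKV : K ⊆ V) (p : Path a b)
    (hp : ∀ t, (p t : E) ∈ K) : holonomy c (.mk p) = segmentHolonomy c (a : E) b := by
  have hs : segment ℝ (a : E) b ⊆ K :=
    hK.segment_subset (by simpa using hp 0) (by simpa using hp 1)
  rw [segmentHolonomy, dif_pos (hs.trans hKV)]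
  refine congrArg (holonomy c) (Path.Homotopic.Quotient.eq.2 (homotopic_of_convex hK hKV hp ?_))
  exact fun t ↦ hs (segmentPath_mem (hs.trans hKV) t)

lemma isConvexCocycle_segmentHolonomy : IsConvexCocycle V (segmentHolonomy c) := by
  intro K hK hKV x hx y hy z hz
  have hxy := hK.segment_subset hx hy
  have hyz := hK.segment_subset hy hz
  rw [segmentHolonomy, segmentHolonomy, dif_pos (hxy.trans hKV), dif_pos (hyz.trans hKV),
    holonomy_mul, ← Path.Homotopic.Quotient.mk_trans]
  refine holonomy_eq_segmentHolonomy hK hKV _ fun t ↦ ?_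
  rcases Path.trans_range (segmentPath (hxy.trans hKV)) (segmentPath (hyz.trans hKV)) ▸
    mem_range_self t with ⟨s, hs⟩ | ⟨s, hs⟩ <;> rw [← hs]
  · exact hxy (segmentPath_mem _ s)
  · exact hyz (segmentPath_mem _ s)

end SegmentHolonomy

lemma rel_zero_one_of_isOpen_cover {ι : Type*} {u : ι → Set unitInterval}
    {Q : unitInterval → unitInterval → Prop} [IsTrans unitInterval Q] (hu : ∀ i, IsOpen (u i))
    (hcover : ⋃ i, u i = univ) (hQ : ∀ i s t, s ≤ t → Icc s t ⊆ u i → Q s t) : Q 0 1 := by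
  obtain ⟨t, ht0, htm, ⟨N, hN⟩, ht⟩ :=
    exists_monotone_Icc_subset_open_cover_unitInterval hu hcover.ge
  have hstep (n) : Q (t n) (t (n + 1)) :=
    let ⟨i, hi⟩ := ht n
    hQ i _ _ (htm n.le_succ) hi
  simpa only [ht0, hN _ N.le_succ] using Nat.rel_of_forall_rel_succ_of_lt Q hstep N.succ_pos

section Approximation

open scoped Function

lemma abs_add_mul_floor_sub_lt {o x δ : ℝ} (hδ : 0 < δ) (h : o ≤ x) :
    |o + δ * ⌊(x - o) / δ⌋₊ - x| < δ := by
  have h₁ := Nat.floor_le (div_nonneg (sub_nonneg.2 h) hδ.le)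
  have h₂ := Nat.lt_floor_add_one ((x - o) / δ)
  rw [le_div_iff₀ hδ] at h₁
  rw [div_lt_iff₀ hδ] at h₂
  rw [abs_lt]
  constructor <;> linarith

lemma natAbs_floor_sub_floor_le {x y : ℝ} (h : |x - y| < 1) :
    (⌊x⌋₊ - ⌊y⌋₊ : ℤ).natAbs ≤ 1 := by
  have key {x y : ℝ} (h : x - y < 1) : ⌊x⌋₊ < ⌊y⌋₊ + 2 := by
    rw [Nat.floor_lt' (by lia)]
    push_cast
    linarith [Nat.lt_floor_add_one y]
  have h₁ := key (abs_lt.1 h).2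
  have h₂ := key (abs_lt.1 (abs_sub_comm x y ▸ h)).2
  lia

variable {V : Set ℂ} {o : ℂ} {δ : ℝ} {z w v : ℂ}

/-- The indices of the lower left vertex of the grid cell containing a point `z` of the quadrant
with corner `o`. -/
noncomputable def gridVertex (o : ℂ) (δ : ℝ) (z : ℂ) : ℕ × ℕ :=
  (⌊(z.re - o.re) / δ⌋₊, ⌊(z.im - o.im) / δ⌋₊)

lemma dist_gridPoint_lt {a : ℕ × ℕ} {r s : ℝ} (hre : |(gridPoint o δ a).re - z.re| < r)
    (him : |(gridPoint o δ a).im - z.im| < s) : dist (gridPoint o δ a) z < r + s := by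
  rw [dist_eq_norm]
  exact (norm_le_abs_re_add_abs_im _).trans_lt (add_lt_add hre him)

lemma dist_gridPoint_gridVertex_lt (hδ : 0 < δ) (hz : z ∈ Ici o.re ×ℂ Ici o.im) :
    dist (gridPoint o δ (gridVertex o δ z)) z < 2 * δ :=
  (two_mul δ).symm ▸ dist_gridPoint_lt (abs_add_mul_floor_sub_lt hδ hz.1)
    (abs_add_mul_floor_sub_lt hδ hz.2)

variable {G : Type*} [Group G] {g : ℂ → ℂ → G} {x y : G}

lemma isChainProd_gridVertex (hδ : 0 < δ) (hg : IsConvexCocycle V g) (hV : ball z (3 * δ) ⊆ V)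
    (hz : z ∈ Ici o.re ×ℂ Ici o.im) (hw : w ∈ Ici o.re ×ℂ Ici o.im) (hwz : dist w z < δ) :
    IsChainProd (GridAdj V o δ) (g on gridPoint o δ) (gridVertex o δ z) (gridVertex o δ w)
      (g (gridPoint o δ (gridVertex o δ z)) (gridPoint o δ (gridVertex o δ w))) := by
  let m : ℕ × ℕ := ((gridVertex o δ w).1, (gridVertex o δ z).2)
  have hre : |w.re - z.re| < δ := (abs_re_le_norm (w - z)).trans_lt (dist_eq_norm w z ▸ hwz)
  have him : |w.im - z.im| < δ := (abs_im_le_norm (w - z)).trans_lt (dist_eq_norm w z ▸ hwz)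
  have hz' : gridPoint o δ (gridVertex o δ z) ∈ ball z (3 * δ) :=
    (dist_gridPoint_gridVertex_lt hδ hz).trans (by linarith)
  have hw' : gridPoint o δ (gridVertex o δ w) ∈ ball z (3 * δ) :=
    (dist_triangle _ w z).trans_lt (by linarith [dist_gridPoint_gridVertex_lt hδ hw])
  have hm' : gridPoint o δ m ∈ ball z (3 * δ) := by
    have hmw : |(gridPoint o δ m).re - w.re| < δ := abs_add_mul_floor_sub_lt hδ hw.1
    have hmre : |(gridPoint o δ m).re - z.re| < 2 * δ :=
      (abs_sub_le _ w.re _).trans_lt (by linarith)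
    refine (dist_gridPoint_lt hmre (abs_add_mul_floor_sub_lt hδ hz.2)).trans_eq ?_
    ring
  have hfloor {x y r : ℝ} (h : |x - y| < δ) :
      (⌊(x - r) / δ⌋₊ - ⌊(y - r) / δ⌋₊ : ℤ).natAbs ≤ 1 := by
    refine natAbs_floor_sub_floor_le ?_
    rwa [← sub_div, sub_sub_sub_cancel_right, abs_div, abs_of_pos hδ, div_lt_one hδ]
  have hzm : GridAdj V o δ (gridVertex o δ z) m :=
    ⟨by simpa [m, gridVertex] using hfloor (abs_sub_comm w.re z.re ▸ hre),
      ((convex_ball _ _).segment_subset hz' hm').trans hV⟩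
  have hmw : GridAdj V o δ m (gridVertex o δ w) :=
    ⟨by simpa [m, gridVertex] using hfloor (abs_sub_comm w.im z.im ▸ him),
      ((convex_ball _ _).segment_subset hm' hw').trans hV⟩
  rw [← hg (convex_ball _ _) hV hz' hm' hw']
  exact (isChainProd_of_rel (g := g on gridPoint o δ) hzm).mul (isChainProd_of_rel hmw)

/-- `y` is the product of `g` along a grid polygon, once the endpoints `z` and `w` are joined to the
grid by segments. -/
def IsGridProd (V : Set ℂ) (o : ℂ) (δ : ℝ) (g : ℂ → ℂ → G) (z w : ℂ) (y : G) : Prop :=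
  IsChainProd (GridAdj V o δ) (g on gridPoint o δ) (gridVertex o δ z) (gridVertex o δ w)
    (g (gridPoint o δ (gridVertex o δ z)) z * y * g w (gridPoint o δ (gridVertex o δ w)))

lemma segment_gridPoint_subset (hδ : 0 < δ) (hV : ball z (3 * δ) ⊆ V)
    (hz : z ∈ Ici o.re ×ℂ Ici o.im) :
    segment ℝ z (gridPoint o δ (gridVertex o δ z)) ⊆ V :=
  ((convex_ball _ _).segment_subset (mem_ball_self (by positivity))
    ((dist_gridPoint_gridVertex_lt hδ hz).trans (by linarith))).trans hV

lemma IsGridProd.mul (hg : IsConvexCocycle V g)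
    (hV : segment ℝ w (gridPoint o δ (gridVertex o δ w)) ⊆ V)
    (hx : IsGridProd V o δ g z w x) (hy : IsGridProd V o δ g w v y) :
    IsGridProd V o δ g z v (x * y) := by
  have h := IsChainProd.mul hx hy
  simp only [mul_assoc] at h
  rwa [← mul_assoc (g w _), hg.mul_symm hV, one_mul, ← mul_assoc x, ← mul_assoc] at h

lemma isGridProd_of_dist_lt (hδ : 0 < δ) (hg : IsConvexCocycle V g) (hV : ball z (3 * δ) ⊆ V)
    (hz : z ∈ Ici o.re ×ℂ Ici o.im) (hw : w ∈ Ici o.re ×ℂ Ici o.im) (hwz : dist w z < δ) :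
    IsGridProd V o δ g z w (g z w) := by
  have hz' : z ∈ ball z (3 * δ) := mem_ball_self (by positivity)
  have hrz : gridPoint o δ (gridVertex o δ z) ∈ ball z (3 * δ) :=
    (dist_gridPoint_gridVertex_lt hδ hz).trans (by linarith)
  have hw' : w ∈ ball z (3 * δ) := hwz.trans (by linarith)
  have hrw : gridPoint o δ (gridVertex o δ w) ∈ ball z (3 * δ) :=
    (dist_triangle _ w z).trans_lt (by linarith [dist_gridPoint_gridVertex_lt hδ hw])
  rw [IsGridProd, hg (convex_ball _ _) hV hrz hz' hw', hg (convex_ball _ _) hV hrz hw' hrw]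
  exact isChainProd_gridVertex hδ hg hV hz hw hwz

lemma IsGridProd.eq_one (hV : IsOpen V) (hlog : ∀ p ∈ frontier V, HasLogBranch V p)
    (hδ : 0 ≤ δ) (hg : IsConvexCocycle V g)
    (hz : segment ℝ z (gridPoint o δ (gridVertex o δ z)) ⊆ V)
    (hy : IsGridProd V o δ g z z y) : y = 1 := by
  obtain ⟨l, hl, hly⟩ := hy
  have h := loopProd_eq_one hV hlog hδ hg (_ :: l) ((Cycle.chain_coe_cons _ _ _).2 hl)
  rwa [loopProd, hly, mul_assoc, mul_eq_one_comm, mul_assoc, hg.mul_symm hz, mul_one] at h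

variable {x₀ a b : V} {c : ∀ v, Path x₀ v}

lemma isGridProd_holonomy_subpath (γ : Path a b) (hδ : 0 < δ) {s t : unitInterval} (hst : s ≤ t)
    (hV : ball (γ s : ℂ) (3 * δ) ⊆ V) (ho : ∀ t, (γ t : ℂ) ∈ Ici o.re ×ℂ Ici o.im)
    (hγ : ∀ r ∈ Icc s t, dist (γ r : ℂ) (γ s) < δ) :
    IsGridProd V o δ (segmentHolonomy c) (γ s) (γ t) (holonomy c (.mk (γ.subpath s t))) := by
  have hball (r) : (γ.subpath s t r : ℂ) ∈ ball (γ s : ℂ) (3 * δ) := by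
    obtain ⟨q, hq, hqr⟩ := Path.range_subpath_of_le γ s t hst ▸ mem_range_self r
    exact hqr ▸ (hγ q hq).trans (by linarith)
  rw [holonomy_eq_segmentHolonomy (convex_ball _ _) hV (γ.subpath s t) hball]
  exact isGridProd_of_dist_lt hδ isConvexCocycle_segmentHolonomy hV (ho s) (ho t)
    (hγ t (right_mem_Icc.2 hst))

lemma isGridProd_holonomy (γ : Path a b) (hδ : 0 < δ) (hV : ∀ t, ball (γ t : ℂ) (3 * δ) ⊆ V)
    (ho : ∀ t, (γ t : ℂ) ∈ Ici o.re ×ℂ Ici o.im) :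
    IsGridProd V o δ (segmentHolonomy c) a b (holonomy c (.mk γ)) := by
  let Q (s t : unitInterval) : Prop :=
    IsGridProd V o δ (segmentHolonomy c) (γ s) (γ t) (holonomy c (.mk (γ.subpath s t)))
  have hQtrans : IsTrans unitInterval Q := ⟨fun r s t hrs hst ↦ by
    have h := hrs.mul isConvexCocycle_segmentHolonomy
      (segment_gridPoint_subset hδ (hV s) (ho s)) hst
    rwa [holonomy_mul, ← Path.Homotopic.Quotient.mk_trans,
      Path.Homotopic.Quotient.eq.2 ⟨Path.Homotopy.subpathTransSubpath γ r s t⟩] at h⟩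
  let u (i : unitInterval) : Set unitInterval := (fun t ↦ (γ t : ℂ)) ⁻¹' ball (γ i) (δ / 2)
  have hu (i) : IsOpen (u i) := isOpen_ball.preimage (by fun_prop)
  have hcover : ⋃ i, u i = univ := iUnion_eq_univ_iff.2 fun t ↦
    ⟨t, mem_ball_self (half_pos hδ)⟩
  have hQ (i s t) (hst : s ≤ t) (hi : Icc s t ⊆ u i) : Q s t := by
    refine isGridProd_holonomy_subpath γ hδ hst (hV s) ho fun r hr ↦ ?_
    have hri : dist (γ r : ℂ) (γ i) < δ / 2 := hi hr
    have hsi : dist (γ s : ℂ) (γ i) < δ / 2 := hi (left_mem_Icc.2 hst)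
    linarith [dist_triangle_right (γ r : ℂ) (γ s) (γ i)]
  have h := rel_zero_one_of_isOpen_cover hu hcover hQ
  have hcast {a' b' : V} (ha : a' = a) (hb : b' = b)
      (h : IsGridProd V o δ (segmentHolonomy c) a' b' (holonomy c (.mk (γ.cast ha hb)))) :
      IsGridProd V o δ (segmentHolonomy c) a b (holonomy c (.mk γ)) := by
    subst ha hb
    exact h
  exact hcast γ.source γ.target (γ.subpath_zero_one ▸ h)

end Approximation

theorem homotopic_refl_of_hasLogBranch {V : Set ℂ} (hV : IsOpen V)
    (hlog : ∀ p ∈ frontier V, HasLogBranch V p) [PathConnectedSpace V] {x : V} (γ : Path x x) :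
    γ.Homotopic (.refl x) := by
  have hcompact : IsCompact (range fun t ↦ (γ t : ℂ)) := isCompact_range (by fun_prop)
  obtain ⟨ε, hε, hεV⟩ := hcompact.exists_thickening_subset_open hV
    (range_subset_iff.2 fun t ↦ (γ t).2)
  obtain ⟨R, hR⟩ := isBounded_iff_forall_norm_le.1 hcompact.isBounded
  have hball (t) : ball (γ t : ℂ) (3 * (ε / 3)) ⊆ V := by
    rw [mul_div_cancel₀ ε three_ne_zero]
    exact (ball_subset_thickening (mem_range_self t) ε).trans hεV
  have ho (t) : (γ t : ℂ) ∈ Ici (-R) ×ℂ Ici (-R) :=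
    have h := hR _ (mem_range_self t)
    ⟨(abs_le.1 ((abs_re_le_norm _).trans h)).1, (abs_le.1 ((abs_im_le_norm _).trans h)).1⟩
  have hδ : 0 < ε / 3 := by positivity
  have hγ := isGridProd_holonomy (c := PathConnectedSpace.somePath x) (o := ⟨-R, -R⟩) γ hδ hball ho
  have hx := segment_gridPoint_subset (o := ⟨-R, -R⟩) hδ (hball 0) (ho 0)
  rw [γ.source] at hx
  exact Path.Homotopic.Quotient.eq.1 <| eq_refl_of_holonomy_eq_one <|
    hγ.eq_one hV hlog hδ.le isConvexCocycle_segmentHolonomy hx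

theorem isSimplyConnected_of_hasLogBranch {V : Set ℂ} (hV : IsOpen V) (hVc : IsConnected V)
    (hlog : ∀ p ∈ frontier V, HasLogBranch V p) : IsSimplyConnected V := by
  have : PathConnectedSpace V :=
    isPathConnected_iff_pathConnectedSpace.1 (hV.isConnected_iff_isPathConnected.1 hVc)
  exact simply_connected_iff_loops_nullhomotopic.2
    ⟨this, fun _ γ ↦ homotopic_refl_of_hasLogBranch hV hlog γ⟩

lemma notMem_or_notMem_of_mem_frontier {X : Type*} [TopologicalSpace X] [LocallyConnectedSpace X]
    {Ω₁ Ω₂ : Set X} (hΩ₁ : IsOpen Ω₁) (hΩ₂ : IsOpen Ω₂) {x p : X}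
    (hp : p ∈ frontier (connectedComponentIn (Ω₁ ∩ Ω₂) x)) :
    p ∉ connectedComponentIn Ω₁ x ∨ p ∉ connectedComponentIn Ω₂ x := by
  by_contra! h
  set V := connectedComponentIn (Ω₁ ∩ Ω₂) x
  have hx : x ∈ Ω₁ ∩ Ω₂ := connectedComponentIn_nonempty_iff.1
    (closure_nonempty_iff.1 ⟨p, hp.1⟩)
  have hins : IsPreconnected (insert p V) := isPreconnected_connectedComponentIn.subset_closure
    (subset_insert p V) (insert_subset hp.1 subset_closure)
  have hsub : insert p V ⊆ Ω₁ ∩ Ω₂ := insert_subset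
    ⟨connectedComponentIn_subset Ω₁ x h.1, connectedComponentIn_subset Ω₂ x h.2⟩
    (connectedComponentIn_subset _ x)
  have hpV : p ∈ V := hins.subset_connectedComponentIn
    (mem_insert_of_mem p (mem_connectedComponentIn hx)) hsub (mem_insert p V)
  exact (hΩ₁.inter hΩ₂).connectedComponentIn.frontier_eq ▸ hp |>.2 hpV

theorem stmt7_general {Ω₁ Ω₂ : Set ℂ} (hΩ₁ : IsOpen Ω₁) (hΩ₂ : IsOpen Ω₂) {x : ℂ}
    (h₁ : IsSimplyConnected (connectedComponentIn Ω₁ x))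
    (h₂ : IsSimplyConnected (connectedComponentIn Ω₂ x)) :
    IsSimplyConnected (connectedComponentIn (Ω₁ ∩ Ω₂) x) := by
  have hx : x ∈ Ω₁ ∩ Ω₂ := ⟨connectedComponentIn_nonempty_iff.1 h₁.nonempty,
    connectedComponentIn_nonempty_iff.1 h₂.nonempty⟩
  refine isSimplyConnected_of_hasLogBranch (hΩ₁.inter hΩ₂).connectedComponentIn
    (isConnected_connectedComponentIn_iff.2 hx) fun p hp ↦ ?_
  rcases notMem_or_notMem_of_mem_frontier hΩ₁ hΩ₂ hp with hp | hp
  · exact (hasLogBranch_of_isSimplyConnected hΩ₁.connectedComponentIn h₁ hp).mono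
      (connectedComponentIn_mono x inter_subset_left)
  · exact (hasLogBranch_of_isSimplyConnected hΩ₂.connectedComponentIn h₂ hp).mono
      (connectedComponentIn_mono x inter_subset_right)

/-- Let `W ⊊ ℂ` be a connected, simply connected open set with `0 ∈ W`, and let
`A`, `B` be closed sets avoiding `0`. If the connected components containing
`0` of `W \ A` and of `W \ B` are simply connected, then so is the connected
component containing `0` of `W \ (A ∪ B)`. -/
theorem stmt7 (W A B : Set ℂ) (hWo : IsOpen W) (hWc : IsConnected W)
    (hWsc : SimplyConnectedSpace W) (hWne : W ≠ Set.univ) (h0W : (0 : ℂ) ∈ W)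
    (hA : IsClosed A) (hB : IsClosed B) (h0A : (0 : ℂ) ∉ A) (h0B : (0 : ℂ) ∉ B)
    (hU : SimplyConnectedSpace (connectedComponentIn (W \ A) 0))
    (hU' : SimplyConnectedSpace (connectedComponentIn (W \ B) 0)) :
    SimplyConnectedSpace (connectedComponentIn (W \ (A ∪ B)) 0) := by
  rw [← sdiff_inter_sdiff]
  exact stmt7_general (hWo.sdiff hA) (hWo.sdiff hB) hU hU'
end

section
/- Let u > 0 and let U = {z ∈ 𝔻 : |z − cosh(u)| > sinh(u)}, the connected component containing 0 of 𝔻 minus the hyperbolic geodesic passing through e^{−u} orthogonal to the segment [0, e^{−u}]. Then U is open and simply connected, and every biholomorphism f : 𝔻 → U with f(0) = 0 satisfies |f′(0)| = 1/cosh(u). -/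
open Complex Metric Set

noncomputable section

/-!
Let `C = cosh u`. The Möbius involution `τ z = (C - z) / (1 - C z)` maps `𝔻` to the exterior of
the closed disc, and `z ↦ 1 / conj (τ z)` is the hyperbolic reflection in the geodesic. Hence
`φ z = z * τ z` has modulus less than `1` on `𝔻` exactly on the side `U` of the geodesic containing
`0`. A fibre of `φ` over a point of `𝔻` is a pair `{z, τ z}` with exactly one member in `𝔻`,
so `φ` maps `U` bijectively to `𝔻`. It satisfies `φ 0 = 0` and `φ' 0 = C`, and for every
biholomorphism `f : 𝔻 → U` fixing `0` the Schwarz lemma for `φ ∘ f` and its inverse gives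
`|C * f' 0| = 1`.
-/

open Filter Topology

section LocalLeftInverse

theorem not_eventually_eq_const_of_eventually_leftInverse {X Y : Type*} [TopologicalSpace X]
    {f : X → Y} {g : Y → X} {x : X} [(𝓝[≠] x).NeBot] (hg : ∀ᶠ y in 𝓝 x, g (f y) = y) :
    ¬∀ᶠ y in 𝓝 x, f y = f x := by
  intro hconst
  have heq : ∀ᶠ y in 𝓝 x, y = x := by
    filter_upwards [hg, hconst] with y hgy hy
    rw [← hgy, hy, hg.self_of_nhds]
  obtain ⟨y, hyx, hne⟩ :=
    ((heq.filter_mono nhdsWithin_le_nhds).and (eventually_mem_nhdsWithin (s := {x}ᶜ))).exists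
  exact hne hyx

theorem continuousAt_of_nhds_le_map_nhds_of_eventually_leftInverse {X Y : Type*}
    [TopologicalSpace X] [TopologicalSpace Y] {f : X → Y} {g : Y → X} {x : X}
    (hf : 𝓝 (f x) ≤ map f (𝓝 x)) (hg : ∀ᶠ y in 𝓝 x, g (f y) = y) : ContinuousAt g (f x) :=
  calc
    map g (𝓝 (f x)) ≤ map g (map f (𝓝 x)) := map_mono hf
    _ = map id (𝓝 x) := by rw [map_map]; exact map_congr hg
    _ = 𝓝 (g (f x)) := by rw [map_id, hg.self_of_nhds]

theorem deriv_mul_deriv_eq_one_of_eventually_leftInverse {𝕜 : Type*} [NontriviallyNormedField 𝕜]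
    {f g : 𝕜 → 𝕜} {x : 𝕜} (hf : DifferentiableAt 𝕜 f x) (hg : DifferentiableAt 𝕜 g (f x))
    (hgf : ∀ᶠ y in 𝓝 x, g (f y) = y) : deriv g (f x) * deriv f x = 1 :=
  (hg.hasDerivAt.comp x hf.hasDerivAt).unique ((hasDerivAt_id x).congr_of_eventuallyEq hgf)

variable {f g : ℂ → ℂ} {z : ℂ}

theorem eventually_eq_const_of_eventually_deriv_eq_zero (hf : AnalyticAt ℂ f z)
    (hderiv : ∀ᶠ w in 𝓝 z, deriv f w = 0) : ∀ᶠ w in 𝓝 z, f w = f z := by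
  obtain ⟨r, hr, hball⟩ :=
    eventually_nhds_iff_ball.1 (hf.eventually_analyticAt.and hderiv)
  filter_upwards [ball_mem_nhds z hr] with w hw
  exact isOpen_ball.is_const_of_deriv_eq_zero (convex_ball z r).isPreconnected
    (fun y hy => (hball y hy).1.differentiableAt.differentiableWithinAt)
    (fun y hy => (hball y hy).2) hw (mem_ball_self hr)

/- The critical points of `f` are isolated, so `g` is holomorphic on a punctured neighbourhood of
`f z`; it is continuous at `f z` since `f` is open, and the singularity is removable. -/
theorem analyticAt_of_eventually_leftInverse (hf : AnalyticAt ℂ f z)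
    (hg : ∀ᶠ w in 𝓝 z, g (f w) = w) : AnalyticAt ℂ g (f z) := by
  have hconst := not_eventually_eq_const_of_eventually_leftInverse hg
  have hopen : 𝓝 (f z) ≤ map f (𝓝 z) :=
    hf.eventually_constant_or_nhds_le_map_nhds.resolve_left hconst
  have hderiv : ∀ᶠ w in 𝓝[≠] z, deriv f w ≠ 0 :=
    hf.deriv.eventually_eq_zero_or_eventually_ne_zero.resolve_left
      (mt (eventually_eq_const_of_eventually_deriv_eq_zero hf) hconst)
  have hdiff : ∀ᶠ w in 𝓝[≠] f z, DifferentiableAt ℂ g w := by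
    rw [eventually_nhdsWithin_iff] at hderiv ⊢
    refine hopen (mem_map.2 ?_)
    filter_upwards [hf.eventually_analyticAt, hg.eventually_nhds, hderiv] with w hfw hgw hw hne
    have hw' : deriv f w ≠ 0 := hw fun hwz => hne (congrArg f hwz)
    exact (hfw.hasStrictDerivAt.to_local_left_inverse hw' hgw).hasDerivAt.differentiableAt
  exact analyticAt_of_differentiable_on_punctured_nhds_of_continuousAt hdiff
    (continuousAt_of_nhds_le_map_nhds_of_eventually_leftInverse hopen hg)

end LocalLeftInverse

theorem norm_deriv_eq_div_of_bijOn_ball {f : ℂ → ℂ} {c : ℂ} {r R : ℝ} (hr : 0 < r)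
    (hf : DifferentiableOn ℂ f (ball c r)) (hbij : BijOn f (ball c r) (ball (f c) R)) :
    ‖deriv f c‖ = R / r := by
  set g := Function.invFunOn f (ball c r)
  have hinv : InvOn g f (ball c r) (ball (f c) R) := hbij.invOn_invFunOn
  have hgmaps : MapsTo g (ball (f c) R) (ball c r) := hbij.surjOn.mapsTo_invFunOn
  have hleft : ∀ z ∈ ball c r, ∀ᶠ w in 𝓝 z, g (f w) = w := fun z hz =>
    eventually_of_mem (isOpen_ball.mem_nhds hz) fun _ hw => hinv.1 hw
  have hg : DifferentiableOn ℂ g (ball (f c) R) := by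
    intro w hw
    have hgw := hgmaps hw
    rw [← hinv.2 hw]
    exact (analyticAt_of_eventually_leftInverse (hf.analyticAt (isOpen_ball.mem_nhds hgw))
      (hleft _ hgw)).differentiableAt.differentiableWithinAt
  have hc : c ∈ ball c r := mem_ball_self hr
  have hR : 0 < R := pos_of_mem_ball (hbij.mapsTo hc)
  have hgc : g (f c) = c := hinv.1 hc
  have hderivf : ‖deriv f c‖ ≤ R / r :=
    norm_deriv_le_div_of_mapsTo_ball hf (hbij.mapsTo.mono_right ball_subset_closedBall) hr
  have hderivg : ‖deriv g (f c)‖ ≤ r / R :=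
    norm_deriv_le_div_of_mapsTo_ball hg
      (by rw [hgc]; exact hgmaps.mono_right ball_subset_closedBall) hR
  have hprod : ‖deriv g (f c)‖ * ‖deriv f c‖ = 1 := by
    rw [← norm_mul, deriv_mul_deriv_eq_one_of_eventually_leftInverse
      (hf.differentiableAt (isOpen_ball.mem_nhds hc))
      (hg.differentiableAt (isOpen_ball.mem_nhds (mem_ball_self hR))) (hleft c hc), norm_one]
  refine hderivf.antisymm ?_
  calc
    R / r = R / r * (‖deriv g (f c)‖ * ‖deriv f c‖) := by rw [hprod, mul_one]
    _ ≤ R / r * (r / R * ‖deriv f c‖) := by gcongr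
    _ = ‖deriv f c‖ := by field_simp

theorem exists_add_eq_and_mul_eq {K : Type*} [Field K] [IsAlgClosed K] (s p : K) :
    ∃ x y : K, x + y = s ∧ x * y = p := by
  have hdeg : (.X ^ 2 - .C s * .X + .C p : Polynomial K).degree = 2 := by compute_degree!
  obtain ⟨x, hx⟩ := IsAlgClosed.exists_root _ (hdeg.trans_ne two_ne_zero)
  obtain ⟨y, -, hadd, hmul⟩ := vieta_formula_quadratic (b := s) (c := p) (x := x)
    (by simpa [sq] using hx)
  exact ⟨x, y, hadd, hmul⟩

section HyperbolicHalfPlane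

/-- For `1 < C`, the component containing `0` of the unit disc minus the hyperbolic geodesic
`|z - C| ^ 2 = C ^ 2 - 1`. The defining inequality `|z - C| ^ 2 > C ^ 2 - 1` is expanded so that no
square root of `C ^ 2 - 1` occurs; for `-1 ≤ C ≤ 1` the set is the whole disc. -/
def hyperbolicHalfPlane (C : ℝ) : Set ℂ :=
  {z | ‖z‖ < 1 ∧ 2 * C * z.re < 1 + ‖z‖ ^ 2}

/-- The Möbius involution `z ↦ (C - z) / (1 - C z)`, which for `1 < C` exchanges the unit disc with
the exterior of its closure. Its pole `1 / C` is sent to `0`. -/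
def exteriorInvolution (C : ℝ) (z : ℂ) : ℂ :=
  (C - z) / (1 - C * z)

/-- The product of `z` with its image under `exteriorInvolution C`. For `1 ≤ C` it is a
Riemann map of `hyperbolicHalfPlane C` onto the unit disc. -/
def foldingMap (C : ℝ) (z : ℂ) : ℂ :=
  z * exteriorInvolution C z

variable {C : ℝ} {z w : ℂ}

theorem setOf_sinh_lt_norm_sub_cosh {u : ℝ} (hu : 0 ≤ u) :
    {z ∈ ball (0 : ℂ) 1 | Real.sinh u < ‖z - (Real.cosh u : ℂ)‖} =
      hyperbolicHalfPlane (Real.cosh u) := by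
  ext z
  have hexpand : ‖z - (Real.cosh u : ℂ)‖ ^ 2 =
      ‖z‖ ^ 2 - 2 * Real.cosh u * z.re + Real.cosh u ^ 2 := by
    simp only [Complex.sq_norm, normSq_apply, sub_re, sub_im, ofReal_re, ofReal_im]
    ring
  have hsq : Real.sinh u < ‖z - (Real.cosh u : ℂ)‖ ↔
      2 * Real.cosh u * z.re < 1 + ‖z‖ ^ 2 := by
    rw [← sq_lt_sq₀ (Real.sinh_nonneg_iff.2 hu) (norm_nonneg _), hexpand, Real.cosh_sq u]
    constructor <;> intro h <;> linarith
  simp only [hyperbolicHalfPlane, mem_ofPred_eq, mem_ball_zero_iff, hsq]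

theorem isOpen_hyperbolicHalfPlane (C : ℝ) : IsOpen (hyperbolicHalfPlane C) := by
  unfold hyperbolicHalfPlane
  exact .and (isOpen_lt (by fun_prop) (by fun_prop)) (isOpen_lt (by fun_prop) (by fun_prop))

theorem zero_mem_hyperbolicHalfPlane (C : ℝ) : 0 ∈ hyperbolicHalfPlane C := by
  simp [hyperbolicHalfPlane]

theorem starConvex_hyperbolicHalfPlane (C : ℝ) : StarConvex ℝ 0 (hyperbolicHalfPlane C) := by
  rw [starConvex_zero_iff]
  rintro z ⟨hz, hre⟩ t ht₀ ht₁
  have hnorm : ‖t • z‖ = t * ‖z‖ := by rw [norm_smul, Real.norm_of_nonneg ht₀]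
  refine ⟨?_, ?_⟩
  · rw [hnorm]
    exact (mul_le_of_le_one_left (norm_nonneg z) ht₁).trans_lt hz
  · have hpos : 0 < 1 - t * ‖z‖ ^ 2 := by nlinarith [norm_nonneg z]
    have hsplit : 1 + (t * ‖z‖) ^ 2 - 2 * C * (t * z.re) =
        (1 - t) * (1 - t * ‖z‖ ^ 2) + t * (1 + ‖z‖ ^ 2 - 2 * C * z.re) := by ring
    rw [hnorm, real_smul, re_ofReal_mul, ← sub_pos, hsplit]
    rcases ht₁.eq_or_lt with rfl | ht₁
    · linarith
    · have := mul_pos (sub_pos.2 ht₁) hpos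
      have := mul_nonneg ht₀ (sub_pos.2 hre).le
      linarith

theorem simplyConnectedSpace_hyperbolicHalfPlane (C : ℝ) :
    SimplyConnectedSpace (hyperbolicHalfPlane C) :=
  have := (starConvex_hyperbolicHalfPlane C).contractibleSpace ⟨0, zero_mem_hyperbolicHalfPlane C⟩
  .ofContractible _

theorem sq_norm_sub_sub_sq_norm_one_sub_mul (C : ℝ) (z : ℂ) :
    ‖C - z‖ ^ 2 - ‖1 - C * z‖ ^ 2 = (C ^ 2 - 1) * (1 - ‖z‖ ^ 2) := by
  simp only [Complex.sq_norm, normSq_apply, sub_re, sub_im, ofReal_re, ofReal_im, mul_re, mul_im,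
    one_re, one_im]
  ring

theorem sq_norm_one_sub_mul_sub_sq_norm_mul_sub (C : ℝ) (z : ℂ) :
    ‖1 - C * z‖ ^ 2 - ‖z * (C - z)‖ ^ 2 = (1 - ‖z‖ ^ 2) * (1 + ‖z‖ ^ 2 - 2 * C * z.re) := by
  simp only [Complex.sq_norm, normSq_apply, sub_re, sub_im, ofReal_re, ofReal_im, mul_re, mul_im,
    one_re, one_im]
  ring

theorem mem_hyperbolicHalfPlane_iff_norm_mul_sub_lt (hz : ‖z‖ < 1) :
    z ∈ hyperbolicHalfPlane C ↔ ‖z * (C - z)‖ < ‖1 - C * z‖ := by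
  have hz' : 0 < 1 - ‖z‖ ^ 2 := sub_pos.2 (pow_lt_one₀ (norm_nonneg z) hz two_ne_zero)
  rw [← sq_lt_sq₀ (norm_nonneg _) (norm_nonneg _), ← sub_pos (b := ‖z * (C - z)‖ ^ 2),
    sq_norm_one_sub_mul_sub_sq_norm_mul_sub, mul_pos_iff_of_pos_left hz', sub_pos]
  exact and_iff_right hz

theorem one_sub_mul_ne_zero_of_mem_hyperbolicHalfPlane (hz : z ∈ hyperbolicHalfPlane C) :
    1 - C * z ≠ 0 :=
  norm_pos_iff.1 <| (norm_nonneg _).trans_lt <|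
    (mem_hyperbolicHalfPlane_iff_norm_mul_sub_lt hz.1).1 hz

theorem one_le_norm_exteriorInvolution (hC : 1 ≤ C) (hz : ‖z‖ ≤ 1) (hpole : 1 - C * z ≠ 0) :
    1 ≤ ‖exteriorInvolution C z‖ := by
  have hnonneg : 0 ≤ (C ^ 2 - 1) * (1 - ‖z‖ ^ 2) :=
    mul_nonneg (sub_nonneg.2 (one_le_pow₀ hC)) (sub_nonneg.2 (pow_le_one₀ (norm_nonneg z) hz))
  rw [exteriorInvolution, norm_div, one_le_div (norm_pos_iff.2 hpole),
    ← sq_le_sq₀ (norm_nonneg _) (norm_nonneg _), ← sub_nonneg,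
    sq_norm_sub_sub_sq_norm_one_sub_mul]
  exact hnonneg

theorem foldingMap_eq_div (C : ℝ) (z : ℂ) : foldingMap C z = z * (C - z) / (1 - C * z) :=
  (mul_div_assoc ..).symm

theorem foldingMap_eq_foldingMap_iff (hz : 1 - C * z ≠ 0) (hw : 1 - C * w ≠ 0) :
    foldingMap C z = foldingMap C w ↔ w = z ∨ w = exteriorInvolution C z := by
  have hfactor : z * (C - z) * (1 - C * w) - w * (C - w) * (1 - C * z) =
      (w - z) * (w * (1 - C * z) - (C - z)) := by ring
  rw [foldingMap_eq_div, foldingMap_eq_div, div_eq_div_iff hz hw, ← sub_eq_zero, hfactor,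
    mul_eq_zero, sub_eq_zero, sub_eq_zero, exteriorInvolution, eq_div_iff hz]

theorem hasDerivAt_foldingMap_zero (C : ℝ) : HasDerivAt (foldingMap C) C 0 := by
  have hτ : DifferentiableAt ℂ (exteriorInvolution C) 0 := by
    unfold exteriorInvolution
    exact .fun_div (by fun_prop) (by fun_prop) (by simp)
  exact ((hasDerivAt_id (0 : ℂ)).mul hτ.hasDerivAt).congr_deriv (by simp [exteriorInvolution])

theorem differentiableOn_foldingMap (C : ℝ) :
    DifferentiableOn ℂ (foldingMap C) (hyperbolicHalfPlane C) := by
  unfold foldingMap exteriorInvolution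
  exact .fun_mul (by fun_prop) <| .fun_div (by fun_prop) (by fun_prop)
    fun _ hz => one_sub_mul_ne_zero_of_mem_hyperbolicHalfPlane hz

theorem mapsTo_foldingMap (C : ℝ) : MapsTo (foldingMap C) (hyperbolicHalfPlane C) (ball 0 1) := by
  intro z hz
  have hpole := one_sub_mul_ne_zero_of_mem_hyperbolicHalfPlane hz
  rw [mem_ball_zero_iff, foldingMap_eq_div, norm_div, div_lt_one (norm_pos_iff.2 hpole)]
  exact (mem_hyperbolicHalfPlane_iff_norm_mul_sub_lt hz.1).1 hz

theorem injOn_foldingMap (hC : 1 ≤ C) : InjOn (foldingMap C) (hyperbolicHalfPlane C) := by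
  intro z hz w hw heq
  have hpole := one_sub_mul_ne_zero_of_mem_hyperbolicHalfPlane hz
  have hpole' := one_sub_mul_ne_zero_of_mem_hyperbolicHalfPlane hw
  rcases (foldingMap_eq_foldingMap_iff hpole hpole').1 heq with hwz | hwτ
  · exact hwz.symm
  · have := one_le_norm_exteriorInvolution hC hz.1.le hpole
    exact absurd hw.1 (hwτ ▸ this.not_gt)

theorem mem_hyperbolicHalfPlane_and_foldingMap_eq (hC : 1 ≤ C) (hz : ‖z‖ < 1) (hw : ‖w‖ < 1)
    (heq : z * (C - z) = w * (1 - C * z)) :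
    z ∈ hyperbolicHalfPlane C ∧ foldingMap C z = w := by
  have hpole : 1 - C * z ≠ 0 := by
    intro hzero
    rcases mul_eq_zero.1 (heq.trans (by rw [hzero, mul_zero])) with rfl | hCz
    · simp at hzero
    · rw [← sub_eq_zero.1 hCz, norm_real, Real.norm_of_nonneg (by linarith)] at hz
      exact hC.not_gt hz
  refine ⟨(mem_hyperbolicHalfPlane_iff_norm_mul_sub_lt hz).2 ?_, ?_⟩
  · rw [heq, norm_mul]
    exact mul_lt_of_lt_one_left (norm_pos_iff.2 hpole) hw
  · rw [foldingMap_eq_div, heq, mul_div_cancel_right₀ _ hpole]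

/- The two solutions of `foldingMap C z = w` have product `w`, so one of them lies in the disc. -/
theorem surjOn_foldingMap (hC : 1 ≤ C) :
    SurjOn (foldingMap C) (hyperbolicHalfPlane C) (ball 0 1) := by
  intro w hw
  rw [mem_ball_zero_iff] at hw
  obtain ⟨x, y, hadd, hmul⟩ := exists_add_eq_and_mul_eq (C * (1 + w) : ℂ) w
  by_cases hx : ‖x‖ < 1
  · exact ⟨x, mem_hyperbolicHalfPlane_and_foldingMap_eq hC hx hw
      (by linear_combination hmul - x * hadd)⟩
  · have hy : ‖y‖ < 1 :=
      calc
        ‖y‖ ≤ ‖x‖ * ‖y‖ := le_mul_of_one_le_left (norm_nonneg y) (not_lt.1 hx)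
        _ = ‖w‖ := by rw [← norm_mul, hmul]
        _ < 1 := hw
    exact ⟨y, mem_hyperbolicHalfPlane_and_foldingMap_eq hC hy hw
      (by linear_combination hmul - y * hadd)⟩

theorem bijOn_foldingMap (hC : 1 ≤ C) :
    BijOn (foldingMap C) (hyperbolicHalfPlane C) (ball 0 1) :=
  ⟨mapsTo_foldingMap C, injOn_foldingMap hC, surjOn_foldingMap hC⟩

theorem norm_deriv_eq_one_div_of_bijOn_hyperbolicHalfPlane (hC : 1 ≤ C) {f : ℂ → ℂ}
    (hf : DifferentiableOn ℂ f (ball 0 1)) (hbij : BijOn f (ball 0 1) (hyperbolicHalfPlane C))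
    (hf₀ : f 0 = 0) : ‖deriv f 0‖ = 1 / C := by
  have hfold₀ : (foldingMap C ∘ f) 0 = 0 := by simp [foldingMap, hf₀]
  have hschwarz : ‖deriv (foldingMap C ∘ f) 0‖ = 1 / 1 :=
    norm_deriv_eq_div_of_bijOn_ball one_pos
      ((differentiableOn_foldingMap C).comp hf hbij.mapsTo)
      (by rw [hfold₀]; exact (bijOn_foldingMap hC).comp hbij)
  have hderiv : deriv (foldingMap C ∘ f) 0 = C * deriv f 0 :=
    ((hasDerivAt_foldingMap_zero C).comp_of_eq 0
      (hf.hasDerivAt (ball_mem_nhds 0 one_pos)) hf₀.symm).deriv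
  have hC₀ : 0 < C := one_pos.trans_le hC
  rw [hderiv, norm_mul, norm_real, Real.norm_of_nonneg hC₀.le, div_one] at hschwarz
  exact eq_one_div_of_mul_eq_one_right hschwarz

end HyperbolicHalfPlane

/-- For `u > 0`, let `U = {z ∈ 𝔻 : |z - cosh u| > sinh u}`, the component of
`𝔻` minus the geodesic through `e^{-u}` orthogonal to `[0, e^{-u}]` that
contains `0`. Then `U` is open and simply connected, and every biholomorphism
`f : 𝔻 → U` with `f 0 = 0` satisfies `|f'(0)| = 1 / cosh u`. -/
theorem stmt9 (u : ℝ) (hu : 0 < u) :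
    IsOpen {z ∈ Metric.ball (0 : ℂ) 1 |
        Real.sinh u < ‖z - (Real.cosh u : ℂ)‖} ∧
    SimplyConnectedSpace ({z ∈ Metric.ball (0 : ℂ) 1 |
        Real.sinh u < ‖z - (Real.cosh u : ℂ)‖}) ∧
    ∀ f : ℂ → ℂ, DifferentiableOn ℂ f (Metric.ball 0 1) →
      Set.BijOn f (Metric.ball 0 1)
        {z ∈ Metric.ball (0 : ℂ) 1 |
          Real.sinh u < ‖z - (Real.cosh u : ℂ)‖} →
      f 0 = 0 →
      ‖deriv f 0‖ = 1 / Real.cosh u := by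
  rw [setOf_sinh_lt_norm_sub_cosh hu.le]
  exact ⟨isOpen_hyperbolicHalfPlane _, simplyConnectedSpace_hyperbolicHalfPlane _,
    fun _ => norm_deriv_eq_one_div_of_bijOn_hyperbolicHalfPlane (Real.one_le_cosh u)⟩
end
end
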